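/- Let f be a positive continuous function on [0,∞) satisfying Condition A, let φ be a branching mechanism (with Lévy measure m) satisfying Grey's condition, let ψ be an immigration mechanism (with immigration measure ν), and let (Q^γ_t)_{t≥0} be the transition semigroup of the CBI-process with branching mechanism φ and immigration mechanism ψ. Let μ be a probability measure on [0,∞) with μ((0,∞)) > 0 (the law of the initial state Y_0). Then for every t > 0, the f-moment ∫_{[0,∞)} ∫_{[0,∞)} f(y) Q^γ_t(x,dy) μ(dx) is finite if and only if ∫_{(1,∞)} f(z) (m+ν)(dz) < ∞ and ∫_{[0,∞)} f(x) μ(dx) < ∞. -/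

import Mathlib

open MeasureTheory Set Filter

noncomputable section

/-- A positive continuous function on `[0,∞)` satisfying Condition A:
there exist `c ≥ 0` and `K > 0` such that `f` is convex on `[c,∞)`,
`f (x*y) ≤ K * f x * f y` for `x, y ∈ [c,∞)`, and `f` is bounded on `[0,c)`. -/
def ConditionA (f : ℝ → ℝ) : Prop :=
  ContinuousOn f (Set.Ici 0) ∧ (∀ x, 0 ≤ x → 0 < f x) ∧
  ∃ c, 0 ≤ c ∧ ∃ K, 0 < K ∧
    ConvexOn ℝ (Set.Ici c) f ∧
    (∀ x y, c ≤ x → c ≤ y → f (x * y) ≤ K * f x * f y) ∧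
    ∃ M, ∀ x, 0 ≤ x → x < c → f x ≤ M

/-- Condition B with constant `K`: `f` is convex and nondecreasing on `[0,∞)`,
submultiplicative up to the constant `K`, and `f > 1` on `[0,∞)`. -/
def ConditionB (f : ℝ → ℝ) (K : ℝ) : Prop :=
  0 < K ∧ ConvexOn ℝ (Set.Ici 0) f ∧ MonotoneOn f (Set.Ici 0) ∧
  (∀ x y, 0 ≤ x → 0 ≤ y → f (x * y) ≤ K * f x * f y) ∧
  (∀ x, 0 ≤ x → 1 < f x)

/-- `φ` is a branching mechanism with parameters `β ∈ ℝ`, `σ ≥ 0` and Lévy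
measure `m` (a σ-finite measure carried by `(0,∞)` with `∫ 1 ∧ z² m(dz) < ∞`):
`φ(λ) = βλ + σ²λ²/2 + ∫ (e^{-zλ} - 1 + zλ 1_{z ≤ 1}) m(dz)`. -/
structure IsBranchingMechanism (φ : ℝ → ℝ) (β σ : ℝ) (m : Measure ℝ) : Prop where
  sigma_nonneg : 0 ≤ σ
  sigmaFinite : SigmaFinite m
  carrier : m (Set.Iic 0) = 0
  levy_finite : ∫⁻ z, ENNReal.ofReal (min 1 (z ^ 2)) ∂m < ⊤
  form : ∀ l, 0 ≤ l →
    φ l = β * l + σ ^ 2 * l ^ 2 / 2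
      + ∫ z, (Real.exp (-(z * l)) - 1 + (if z ≤ 1 then z * l else 0)) ∂m

/-- Grey's condition: `∫_{0+} φ(λ)⁻¹ dλ = ∞`, i.e. `φ⁻¹` fails to be
integrable on every right neighbourhood of `0`. -/
def GreyCondition (φ : ℝ → ℝ) : Prop :=
  ∀ ε, 0 < ε → ¬ IntegrableOn (fun l => (φ l)⁻¹) (Set.Ioo 0 ε) volume

/-- `v t l` is the nonnegative solution of `v_t(λ) = λ - ∫_0^t φ(v_s(λ)) ds`. -/
def IsCumulant (φ : ℝ → ℝ) (v : ℝ → ℝ → ℝ) : Prop :=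
  ∀ l, 0 ≤ l → ∀ t, 0 ≤ t →
    0 ≤ v t l ∧ v t l = l - ∫ s in (0:ℝ)..t, φ (v s l)

/-- `(Q t)_{t ≥ 0}` is the transition semigroup of the CB-process with cumulant
`v`: each `Q t x` is a probability measure on `[0,∞)` with Laplace transform
`∫ e^{-λ y} Q_t(x, dy) = e^{-x v_t(λ)}`. -/
def IsCBSemigroup (v : ℝ → ℝ → ℝ) (Q : ℝ → ℝ → Measure ℝ) : Prop :=
  ∀ t x, 0 ≤ t → 0 ≤ x →
    IsProbabilityMeasure (Q t x) ∧ Q t x (Set.Iio 0) = 0 ∧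
    ∀ l, 0 ≤ l → ∫ y, Real.exp (-(l * y)) ∂(Q t x) = Real.exp (-(x * v t l))

/-- `ψ` is an immigration mechanism with drift `h ≥ 0` and immigration measure
`ν` (a σ-finite measure carried by `(0,∞)` with `∫ 1 ∧ z ν(dz) < ∞`):
`ψ(λ) = hλ + ∫ (1 - e^{-λz}) ν(dz)`. -/
structure IsImmigrationMechanism (ψ : ℝ → ℝ) (h : ℝ) (ν : Measure ℝ) : Prop where
  h_nonneg : 0 ≤ h
  sigmaFinite : SigmaFinite ν
  carrier : ν (Set.Iic 0) = 0
  levy_finite : ∫⁻ z, ENNReal.ofReal (min 1 z) ∂ν < ⊤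
  form : ∀ l, 0 ≤ l → ψ l = h * l + ∫ z, (1 - Real.exp (-(l * z))) ∂ν

/-- `(Q^γ t)_{t ≥ 0}` is the transition semigroup of the CBI-process with
cumulant `v` and immigration mechanism `ψ`: each `Qγ t x` is a probability
measure on `[0,∞)` with Laplace transform
`∫ e^{-λ y} Q^γ_t(x, dy) = exp(-x v_t(λ) - ∫_0^t ψ(v_s(λ)) ds)`. -/
def IsCBISemigroup (v : ℝ → ℝ → ℝ) (ψ : ℝ → ℝ) (Qγ : ℝ → ℝ → Measure ℝ) : Prop :=
  ∀ t x, 0 ≤ t → 0 ≤ x →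
    IsProbabilityMeasure (Qγ t x) ∧ Qγ t x (Set.Iio 0) = 0 ∧
    ∀ l, 0 ≤ l →
      ∫ y, Real.exp (-(l * y)) ∂(Qγ t x)
        = Real.exp (-(x * v t l) - ∫ s in (0:ℝ)..t, ψ (v s l))


/-- Regularised convex function comparable with `f`. -/
structure GoodG (G G1 G2 : ℝ → ℝ) (D : ℝ) : Prop where
  one_le : 1 ≤ D
  d1 : ∀ x, HasDerivAt G (G1 x) x
  d2 : ∀ x, HasDerivAt G1 (G2 x) x
  c2 : Continuous G2
  ge1 : ∀ x, 0 ≤ x → 1 ≤ G x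
  G1nn : ∀ x, 0 ≤ G1 x
  G2nn : ∀ x, 0 ≤ G2 x
  G1le : ∀ x, 0 ≤ x → (1 + x) * G1 x ≤ D * G x
  G2le : ∀ x, 0 ≤ x → (1 + x) * G2 x ≤ D * G x
  dbl : ∀ x, 0 ≤ x → G (2 * x + 2) ≤ D * G x
  lin : ∀ x, 0 ≤ x → x ≤ D * G x

/-- First regularisation step. -/
structure GoodPre (g : ℝ → ℝ) (D : ℝ) : Prop where
  one_le : 1 ≤ D
  conv : ConvexOn ℝ univ g
  mono : Monotone g
  cont : Continuous g
  ge1 : ∀ x, 1 ≤ g x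
  dbl : ∀ x, 0 ≤ x → g (2 * x + 4) ≤ D * g x
  lin : ∀ x, 0 ≤ x → x ≤ D * g x

lemma condA_pre (f : ℝ → ℝ) (hf : ConditionA f) :
    (∃ M, ∀ x, 0 ≤ x → f x ≤ M) ∨
    ∃ g D a, GoodPre g D ∧ 0 < a ∧ ∀ x, 0 ≤ x → f x ≤ a * g x ∧ g x ≤ a * f x := by
  obtain ⟨hc, hpos, c, hc0, K, hK, hconv, hsub, M, hM⟩ := hf
  by_cases hanti : AntitoneOn f (Ici c)
  · left
    refine ⟨max M (f c), fun x hx => ?_⟩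
    rcases lt_or_ge x c with h | h
    · exact le_max_of_le_left (hM x hx h)
    · exact le_max_of_le_right (hanti (mem_Ici.2 le_rfl) h h)
  right
  have : ∃ a b, c ≤ a ∧ a < b ∧ f a < f b := by
    simp only [AntitoneOn, not_forall, not_le] at hanti
    obtain ⟨a, ha, b, hb, hab, hlt⟩ := hanti
    refine ⟨a, b, ha, lt_of_le_of_ne hab ?_, hlt⟩
    rintro rfl; exact lt_irrefl _ hlt
  obtain ⟨a, b, hca, hab, hfab⟩ := this
  set s := (f b - f a) / (b - a) with hs
  have hspos : 0 < s := div_pos (by linarith) (by linarith)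
  have hslope : ∀ x, b ≤ x → f b + s * (x - b) ≤ f x := by
    intro x hx
    rcases eq_or_lt_of_le hx with h | h
    · rw [h]; simp
    · have := hconv.slope_mono_adjacent (x := a) (y := b) (z := x) hca
        (by simp only [mem_Ici]; linarith) hab h
      rw [← hs, le_div_iff₀ (by linarith)] at this
      linarith
  have hmono : ∀ x y, b ≤ x → x ≤ y → f x ≤ f y := by
    intro x y hx hxy
    rcases eq_or_lt_of_le hxy with h | h
    · rw [h]
    · have h1 := hconv.slope_mono_adjacent (x := a) (y := x) (z := y) hca
        (by simp only [mem_Ici]; linarith) (by linarith) h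
      have h2 : 0 ≤ (f x - f a) / (x - a) := by
        apply div_nonneg _ (by linarith)
        have := hslope x hx
        nlinarith [mul_nonneg hspos.le (sub_nonneg.2 hx)]
      have h3 := h2.trans h1
      by_contra hlt
      push Not at hlt
      have : (f y - f x) / (y - x) < 0 := div_neg_of_neg_of_pos (by linarith) (by linarith)
      linarith
  set c' := max b 1 with hc'
  have hbc' : b ≤ c' := le_max_left _ _
  have h1c' : 1 ≤ c' := le_max_right _ _
  have hfc' : 0 < f c' := hpos _ (by linarith)
  set d := max c 8 with hd
  have hcd : c ≤ d := le_max_left _ _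
  have h8d : 8 ≤ d := le_max_right _ _
  have hfd : 0 < f d := hpos _ (by linarith)
  have hdbl : ∀ x, 0 ≤ x → f (2 * x + 4 + c') ≤ K * f d * f (x + c') := by
    intro x hx
    refine (hmono _ (d * (x + c')) (by linarith) (by nlinarith)).trans ?_
    exact hsub _ _ hcd (by linarith)
  -- compactness bounds
  obtain ⟨x1, hx1, hx1m⟩ := (isCompact_Icc (a := (0:ℝ)) (b := c')).exists_isMaxOn ⟨0, by simp; linarith⟩
    (hc.mono (fun x hx => hx.1))
  obtain ⟨x2, hx2, hx2m⟩ := (isCompact_Icc (a := (0:ℝ)) (b := c')).exists_isMinOn ⟨0, by simp; linarith⟩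
    (hc.mono (fun x hx => hx.1))
  have hfx1 : 0 < f x1 := hpos _ hx1.1
  have hfx2 : 0 < f x2 := hpos _ hx2.1
  have hf2c : 0 < f (c' + c') := hpos _ (by linarith)
  set A := max (max (f x1) (f c')) (max (f (c' + c') / (f c' * f x2)) (K * f d / f c')) with hA
  have hA1 : f x1 ≤ A := (le_max_left _ _).trans (le_max_left _ _)
  have hA2 : f c' ≤ A := (le_max_right _ _).trans (le_max_left _ _)
  have hA3 : f (c' + c') / (f c' * f x2) ≤ A := (le_max_left _ _).trans (le_max_right _ _)
  have hA4 : K * f d / f c' ≤ A := (le_max_right _ _).trans (le_max_right _ _)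
  have hApos : 0 < A := hfc'.trans_le hA2
  have hge1 : ∀ x, 1 ≤ f (max x 0 + c') / f c' := by
    intro x
    rw [le_div_iff₀ hfc', one_mul]
    exact hmono _ _ hbc' (by linarith [le_max_right x 0])
  refine ⟨fun x => f (max x 0 + c') / f c', max 1 (max (K * f d) (f c' / s)), A, ⟨le_max_left _ _, ?_, ?_, ?_, hge1, ?_, ?_⟩, hApos, ?_⟩
  · refine ⟨convex_univ, fun p _ q _ α β' hα hβ hαβ => ?_⟩
    simp only [smul_eq_mul]
    rw [mul_div_assoc', mul_div_assoc', ← add_div]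
    apply div_le_div_of_nonneg_right _ hfc'.le
    have h1 : max (α * p + β' * q) 0 ≤ α * max p 0 + β' * max q 0 := by
      apply max_le
      · exact add_le_add (mul_le_mul_of_nonneg_left (le_max_left _ _) hα)
          (mul_le_mul_of_nonneg_left (le_max_left _ _) hβ)
      · have := le_max_right p 0; have := le_max_right q 0; positivity
    have hmp := le_max_right p 0
    have hmq := le_max_right q 0
    have h2 := hconv.2 (x := max p 0 + c') (y := max q 0 + c')
      (by simp only [mem_Ici]; linarith) (by simp only [mem_Ici]; linarith) hα hβ hαβ
    simp only [smul_eq_mul] at h2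
    refine le_trans (hmono _ _ (by linarith [le_max_right (α * p + β' * q) 0]) ?_) h2
    have : α * (max p 0 + c') + β' * (max q 0 + c') = α * max p 0 + β' * max q 0 + (α + β') * c' := by ring
    rw [this, hαβ]; linarith
  · intro x y hxy
    apply div_le_div_of_nonneg_right _ hfc'.le
    apply hmono _ _ (by linarith [le_max_right x 0])
    have := max_le_max_right 0 hxy
    linarith
  · apply Continuous.div_const
    apply hc.comp_continuous (by fun_prop)
    intro x
    simp only [mem_Ici]
    linarith [le_max_right x 0]
  · intro x hx
    rw [max_eq_left (by linarith), max_eq_left hx, mul_div_assoc']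
    apply div_le_div_of_nonneg_right _ hfc'.le
    refine (hdbl x hx).trans ?_
    apply mul_le_mul_of_nonneg_right _ (hpos _ (by linarith)).le
    exact (le_max_left _ _).trans (le_max_right _ _)
  · intro x hx
    rw [max_eq_left hx]
    have h1 := hslope (x + c') (by linarith)
    have h2 : x ≤ f (x + c') / s := by
      rw [le_div_iff₀ hspos]
      have := hpos b (by linarith)
      nlinarith
    calc x ≤ f (x + c') / s := h2
      _ = f c' / s * (f (x + c') / f c') := by field_simp
      _ ≤ _ := by
        apply mul_le_mul_of_nonneg_right ((le_max_right _ _).trans (le_max_right _ _))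
        exact div_nonneg (hpos _ (by linarith)).le hfc'.le
  · intro x hx
    constructor
    · rcases le_total x c' with h | h
      · calc f x ≤ f x1 := hx1m ⟨hx, h⟩
          _ ≤ A * 1 := by linarith
          _ ≤ _ := mul_le_mul_of_nonneg_left (hge1 x) hApos.le
      · simp only [max_eq_left hx]
        have h1 : f x ≤ f (x + c') := hmono _ _ (by linarith) (by linarith)
        rw [mul_div_assoc', le_div_iff₀ hfc']
        have := hpos x hx
        nlinarith
    · simp only [max_eq_left hx]
      rw [div_le_iff₀ hfc']
      rcases le_total x c' with h | h
      · have h1 : f (x + c') ≤ f (c' + c') := hmono _ _ (by linarith) (by linarith)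
        have h2 : f x2 ≤ f x := hx2m ⟨hx, h⟩
        rw [div_le_iff₀ (by positivity)] at hA3
        calc f (x + c') ≤ A * (f c' * f x2) := h1.trans hA3
          _ ≤ A * (f c' * f x) := by gcongr
          _ = _ := by ring
      · rw [div_le_iff₀ hfc'] at hA4
        have h3 : f (x + c') ≤ K * f d * f x := by
          refine (hmono _ (d * x) (by linarith) (by nlinarith)).trans ?_
          exact hsub _ _ hcd (by linarith)
        calc f (x + c') ≤ K * f d * f x := h3
          _ ≤ A * f c' * f x := by
            apply mul_le_mul_of_nonneg_right hA4 (hpos _ hx).le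
          _ = _ := by ring

lemma good_of_pre (g : ℝ → ℝ) (D : ℝ) (hg : GoodPre g D) :
    ∃ G G1 G2, GoodG G G1 G2 D ∧ ∀ x, 0 ≤ x → g x ≤ G x ∧ G x ≤ D * g x := by
  have hΦ : ∀ y, HasDerivAt (fun y => ∫ r in (0:ℝ)..y, g r) (g y) y := fun y =>
    intervalIntegral.integral_hasDerivAt_right (hg.cont.intervalIntegrable _ _)
      (hg.cont.stronglyMeasurableAtFilter _ _) hg.cont.continuousAt
  set Φ : ℝ → ℝ := fun y => ∫ r in (0:ℝ)..y, g r
  have hΦ1 : ∀ y, HasDerivAt (fun y => Φ (y + 1)) (g (y + 1)) y := fun y =>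
    (hΦ (y + 1)).comp_add_const y 1
  set H : ℝ → ℝ := fun y => Φ (y + 1) - Φ y with hHdef
  have hH : ∀ y, HasDerivAt H (g (y + 1) - g y) y := fun y => (hΦ1 y).sub (hΦ y)
  have hHc : Continuous H := continuous_iff_continuousAt.2 fun y => (hH y).continuousAt
  have hΨ : ∀ y, HasDerivAt (fun y => ∫ r in (0:ℝ)..y, H r) (H y) y := fun y =>
    intervalIntegral.integral_hasDerivAt_right (hHc.intervalIntegrable _ _)
      (hHc.stronglyMeasurableAtFilter _ _) hHc.continuousAt
  set Ψ : ℝ → ℝ := fun y => ∫ r in (0:ℝ)..y, H r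
  have hΨ1 : ∀ y, HasDerivAt (fun y => Ψ (y + 1)) (H (y + 1)) y := fun y =>
    (hΨ (y + 1)).comp_add_const y 1
  have hH1 : ∀ y, HasDerivAt (fun y => H (y + 1)) (g (y + 1 + 1) - g (y + 1)) y := fun y =>
    (hH (y + 1)).comp_add_const y 1
  -- bounds
  have mvt : ∀ (F F' : ℝ → ℝ), (∀ y, HasDerivAt F (F' y) y) → ∀ a b, a < b →
      ∃ ξ ∈ Ioo a b, F b - F a = F' ξ * (b - a) := by
    intro F F' hF a b hab
    obtain ⟨ξ, hξ, h⟩ := exists_hasDerivAt_eq_slope F F' hab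
      (continuous_iff_continuousAt.2 fun y => (hF y).continuousAt).continuousOn (fun y _ => hF y)
    refine ⟨ξ, hξ, ?_⟩
    rw [h]; field_simp [sub_ne_zero.2 hab.ne']
  have hHmono : Monotone H := monotone_of_hasDerivAt_nonneg hH
    (fun y => by simpa using hg.mono (by linarith))
  have hHlo : ∀ y, g y ≤ H y := by
    intro y
    obtain ⟨ξ, hξ, h⟩ := mvt Φ g hΦ y (y + 1) (by linarith)
    simp only [hHdef, h]
    have := hg.mono hξ.1.le
    linarith
  have hHhi : ∀ y, H y ≤ g (y + 1) := by
    intro y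
    obtain ⟨ξ, hξ, h⟩ := mvt Φ g hΦ y (y + 1) (by linarith)
    simp only [hHdef, h]
    have := hg.mono hξ.2.le
    linarith
  have hGd : ∀ y, HasDerivAt (fun y => Ψ (y + 1) - Ψ y) (H (y + 1) - H y) y :=
    fun y => (hΨ1 y).sub (hΨ y)
  have hG1d : ∀ y, HasDerivAt (fun y => H (y + 1) - H y)
      (g (y + 1 + 1) - g (y + 1) - (g (y + 1) - g y)) y := fun y => (hH1 y).sub (hH y)
  have hGlo : ∀ y, g y ≤ Ψ (y + 1) - Ψ y := by
    intro y
    obtain ⟨ξ, hξ, h⟩ := mvt Ψ H hΨ y (y + 1) (by linarith)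
    rw [h]
    have := hHmono hξ.1.le
    have := hHlo y
    linarith
  have hGhi : ∀ y, Ψ (y + 1) - Ψ y ≤ g (y + 2) := by
    intro y
    obtain ⟨ξ, hξ, h⟩ := mvt Ψ H hΨ y (y + 1) (by linarith)
    rw [h]
    have := hHmono hξ.2.le
    have := hHhi (y + 1)
    rw [show y + 1 + 1 = y + 2 by ring] at this
    linarith
  have hG2nn : ∀ y, 0 ≤ g (y + 1 + 1) - g (y + 1) - (g (y + 1) - g y) := by
    intro y
    have := hg.conv.slope_mono_adjacent (x := y) (y := y + 1) (z := y + 1 + 1) (mem_univ _) (mem_univ _)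
      (by linarith) (by linarith)
    simp only [add_sub_cancel_left, div_one] at this
    linarith
  have hG1mono : Monotone (fun y => H (y + 1) - H y) := monotone_of_hasDerivAt_nonneg hG1d hG2nn
  have hG1nn : ∀ y, 0 ≤ H (y + 1) - H y := fun y => by
    have := hHmono (show y ≤ y + 1 by linarith); linarith
  have hDnn : 0 ≤ D := by linarith [hg.one_le]
  have hdbl : ∀ x, 0 ≤ x → Ψ (2 * x + 2 + 1) - Ψ (2 * x + 2) ≤ D * (Ψ (x + 1) - Ψ x) := by
    intro x hx
    refine (hGhi _).trans ?_
    rw [show 2 * x + 2 + 2 = 2 * x + 4 by ring]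
    exact (hg.dbl x hx).trans (mul_le_mul_of_nonneg_left (hGlo x) hDnn)
  have hGmono : Monotone (fun y => Ψ (y + 1) - Ψ y) := monotone_of_hasDerivAt_nonneg hGd hG1nn
  refine ⟨fun y => Ψ (y + 1) - Ψ y, fun y => H (y + 1) - H y,
    fun y => g (y + 1 + 1) - g (y + 1) - (g (y + 1) - g y),
    ⟨hg.one_le, hGd, hG1d, ?_, fun x _ => (hg.ge1 x).trans (hGlo x), hG1nn, hG2nn, ?_, ?_, hdbl, ?_⟩, ?_⟩
  · have := hg.cont
    fun_prop
  · intro x hx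
    obtain ⟨ξ, hξ, h⟩ := mvt _ _ hGd x (2 * x + 2) (by linarith)
    have h1 : H (x + 1) - H x ≤ H (ξ + 1) - H ξ := hG1mono hξ.1.le
    have h2 := hdbl x hx
    have h3 := hGlo x
    have h4 := hg.ge1 x
    have h5 : (H (x + 1) - H x) * (2 * x + 2 - x) ≤ (H (ξ + 1) - H ξ) * (2 * x + 2 - x) :=
      mul_le_mul_of_nonneg_right h1 (by linarith)
    have h6 := hG1nn x
    nlinarith
  · intro x hx
    have h1 := hg.conv.slope_mono_adjacent (x := x + 1) (y := x + 1 + 1) (z := 2 * x + 4) (mem_univ _)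
      (mem_univ _) (by linarith) (by linarith)
    rw [add_sub_cancel_left, div_one, le_div_iff₀ (by linarith)] at h1
    have h2 := hg.dbl x hx
    have h3 := mul_le_mul_of_nonneg_left (hGlo x) hDnn
    have h4 : 0 ≤ g (x + 1) - g x := by have := hg.mono (show x ≤ x + 1 by linarith); linarith
    have h5 := hG2nn x
    have h6 := hg.ge1 (x + 1 + 1)
    have h7 : 0 ≤ g (x + 1 + 1) - g (x + 1) := by linarith
    have h8 : 0 ≤ (1 + x) * (g (x + 1) - g x) := by positivity
    have h9 : (1 + x) * (g (x + 1 + 1) - g (x + 1)) ≤ (g (x + 1 + 1) - g (x + 1)) * (2 * x + 4 - (x + 1 + 1)) := by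
      nlinarith
    nlinarith
  · intro x hx
    exact (hg.lin x hx).trans (mul_le_mul_of_nonneg_left (hGlo x) hDnn)
  · intro x hx
    exact ⟨hGlo x, (hGhi x).trans ((hg.mono (by linarith)).trans (hg.dbl x hx))⟩

lemma condA_good (f : ℝ → ℝ) (hf : ConditionA f) :
    (∃ M, ∀ x, 0 ≤ x → f x ≤ M) ∨
    ∃ G G1 G2 D a, GoodG G G1 G2 D ∧ 0 < a ∧ ∀ x, 0 ≤ x → f x ≤ a * G x ∧ G x ≤ a * f x := by
  rcases condA_pre f hf with h | ⟨g, D, a, hg, ha, hfg⟩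
  · exact Or.inl h
  right
  obtain ⟨G, G1, G2, hG, hgG⟩ := good_of_pre g D hg
  have hD := hg.one_le
  refine ⟨G, G1, G2, D, D * a, hG, by positivity, fun x hx => ?_⟩
  obtain ⟨h1, h2⟩ := hfg x hx
  obtain ⟨h3, h4⟩ := hgG x hx
  have h5 := hg.ge1 x
  constructor
  · calc f x ≤ a * g x := h1
      _ ≤ a * G x := by gcongr
      _ ≤ D * (a * G x) := le_mul_of_one_le_left (by have := h5.trans h3; positivity) hD
      _ = _ := by ring
  · calc G x ≤ D * g x := h4
      _ ≤ D * (a * f x) := by gcongr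
      _ = _ := by ring


lemma exp_neg_le_quad (y : ℝ) (hy : 0 ≤ y) : Real.exp (-y) ≤ 1 - y + y ^ 2 / 2 := by
  have h1 := Real.quadratic_le_exp_of_nonneg hy
  have h2 : Real.exp (-y) * Real.exp y = 1 := by rw [← Real.exp_add]; simp
  have h3 := Real.exp_pos (-y)
  have h4 : 1 ≤ (1 - y + y ^ 2 / 2) * (1 + y + y ^ 2 / 2) := by nlinarith [sq_nonneg (y ^ 2)]
  have h5 : Real.exp (-y) * (1 + y + y ^ 2 / 2) ≤ 1 :=
    (mul_le_mul_of_nonneg_left h1 h3.le).trans h2.le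
  have h6 : 0 < 1 + y + y ^ 2 / 2 := by positivity
  by_contra hlt
  push Not at hlt
  nlinarith [mul_lt_mul_of_pos_right hlt h6]

/-- The Lévy-Khintchine integrand. -/
def lkq (z l : ℝ) : ℝ := Real.exp (-(z * l)) - 1 + (if z ≤ 1 then z * l else 0)

lemma lkq_abs_le (z l : ℝ) (hz : 0 < z) (hl : 0 ≤ l) : |lkq z l| ≤ (1 + l ^ 2) * min 1 (z ^ 2) := by
  have hzl : 0 ≤ z * l := by positivity
  unfold lkq
  split_ifs with h
  · have h1 := exp_neg_le_quad (z * l) hzl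
    have h2 := Real.add_one_le_exp (-(z * l))
    rw [abs_of_nonneg (by linarith), min_eq_right (by nlinarith)]
    nlinarith [sq_nonneg (z * l), sq_nonneg z]
  · push Not at h
    rw [min_eq_left (by nlinarith)]
    have h1 := Real.exp_pos (-(z * l))
    have h2 : Real.exp (-(z * l)) ≤ 1 := Real.exp_le_one_iff.2 (by linarith)
    rw [abs_le]; constructor <;> nlinarith [sq_nonneg l]

lemma lkq_le (z l : ℝ) (hz : 0 < z) (hl : 0 ≤ l) : lkq z l ≤ l ^ 2 * min 1 (z ^ 2) := by
  have hzl : 0 ≤ z * l := by positivity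
  unfold lkq
  split_ifs with h
  · have h1 := exp_neg_le_quad (z * l) hzl
    rw [min_eq_right (by nlinarith)]
    nlinarith [sq_nonneg (z * l), sq_nonneg z]
  · have h2 : Real.exp (-(z * l)) ≤ 1 := Real.exp_le_one_iff.2 (by linarith)
    have : 0 ≤ min 1 (z ^ 2) := by positivity
    nlinarith [mul_nonneg (sq_nonneg l) this]

lemma lkq_ge (z l : ℝ) (hz : 0 < z) : - min 1 (z ^ 2) ≤ lkq z l := by
  unfold lkq
  split_ifs with h
  · have h2 := Real.add_one_le_exp (-(z * l))
    have : 0 ≤ min 1 (z ^ 2) := by positivity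
    linarith
  · push Not at h
    rw [min_eq_left (by nlinarith)]
    have h1 := Real.exp_pos (-(z * l))
    linarith

lemma lkq_lip (z a b l l' : ℝ) (hz : 0 < z) (ha : 0 < a) (hl : l ∈ Icc a b) (hl' : l' ∈ Icc a b) :
    |lkq z l - lkq z l'| ≤ (b + a⁻¹) * min 1 (z ^ 2) * |l - l'| := by
  have hab : a ≤ b := hl.1.trans hl.2
  have hd : ∀ x ∈ Icc a b, HasDerivWithinAt (fun l => lkq z l)
      (Real.exp (-(z * x)) * (-z) + (if z ≤ 1 then z else 0)) (Icc a b) x := by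
    intro x hx
    apply HasDerivAt.hasDerivWithinAt
    have h0 : HasDerivAt (fun l => -(z * l)) (-z) x := by
      simpa using ((hasDerivAt_id' x).const_mul z).fun_neg
    have h1 := (h0.exp).sub_const 1
    unfold lkq
    split_ifs with h
    · have h2 : HasDerivAt (fun l => z * l) z x := by simpa using (hasDerivAt_id x).const_mul z
      exact h1.add h2
    · simpa using h1
  have := Convex.norm_image_sub_le_of_norm_hasDerivWithin_le (C := (b + a⁻¹) * min 1 (z ^ 2)) hd ?_
    (convex_Icc a b) hl' hl
  · simpa [Real.norm_eq_abs] using this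
  · intro x hx
    have hx0 : 0 < x := ha.trans_le hx.1
    have hzx : 0 < z * x := by positivity
    rw [Real.norm_eq_abs]
    have hai : 0 < a⁻¹ := by positivity
    split_ifs with h
    · rw [min_eq_right (by nlinarith)]
      have h2 := Real.add_one_le_exp (-(z * x))
      have h3 : Real.exp (-(z * x)) ≤ 1 := Real.exp_le_one_iff.2 (by linarith)
      rw [abs_of_nonneg (by nlinarith)]
      have h4 : z * (1 - Real.exp (-(z * x))) ≤ z * (z * x) := by gcongr; linarith
      have h5 : z * (z * x) ≤ z ^ 2 * b := by
        have : z * (z * x) = z ^ 2 * x := by ring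
        rw [this]; gcongr; exact hx.2
      nlinarith [mul_pos hai (pow_pos hz 2)]
    · push Not at h
      rw [min_eq_left (by nlinarith), add_zero, abs_mul, abs_neg, abs_of_pos (Real.exp_pos _), abs_of_pos hz]
      have h2 := Real.add_one_le_exp (z * x)
      rw [Real.exp_neg]
      have h3 : (Real.exp (z * x))⁻¹ * z ≤ a⁻¹ := by
        rw [inv_mul_le_iff₀ (Real.exp_pos _), ← div_eq_mul_inv, le_div_iff₀ ha]
        have : z * a ≤ z * x := by gcongr; exact hx.1
        linarith
      linarith

lemma lkq_meas (l : ℝ) : Measurable (fun z => lkq z l) := by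
  unfold lkq
  apply Measurable.add (by fun_prop)
  exact Measurable.ite measurableSet_Iic (by fun_prop) (by fun_prop)

section phi
variable {φ : ℝ → ℝ} {β σ : ℝ} {m : Measure ℝ}

lemma bm_ae_pos (hφ : IsBranchingMechanism φ β σ m) : ∀ᵐ z ∂m, 0 < z := by
  rw [ae_iff]; simpa [Set.Iic, not_lt] using hφ.carrier

lemma bm_int (hφ : IsBranchingMechanism φ β σ m) : Integrable (fun z : ℝ => min 1 (z ^ 2)) m := by
  refine ⟨by fun_prop, ?_⟩
  rw [hasFiniteIntegral_iff_ofReal (ae_of_all _ fun z => by positivity)]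
  exact hφ.levy_finite

lemma bm_lkq_int (hφ : IsBranchingMechanism φ β σ m) (l : ℝ) (hl : 0 ≤ l) :
    Integrable (fun z => lkq z l) m := by
  refine ((bm_int hφ).const_mul (1 + l ^ 2)).mono' (lkq_meas l).aestronglyMeasurable ?_
  filter_upwards [bm_ae_pos hφ] with z hz
  exact lkq_abs_le z l hz hl

lemma bm_form (hφ : IsBranchingMechanism φ β σ m) (l : ℝ) (hl : 0 ≤ l) :
    φ l = β * l + σ ^ 2 * l ^ 2 / 2 + ∫ z, lkq z l ∂m := hφ.form l hl

lemma bm_zero (hφ : IsBranchingMechanism φ β σ m) : φ 0 = 0 := by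
  rw [bm_form hφ 0 le_rfl]; simp [lkq]

lemma bm_cont (hφ : IsBranchingMechanism φ β σ m) : ContinuousOn φ (Ici 0) := by
  have : ContinuousOn (fun l => β * l + σ ^ 2 * l ^ 2 / 2 + ∫ z, lkq z l ∂m) (Ici 0) := by
    apply ContinuousOn.add (by fun_prop)
    intro x hx
    apply continuousWithinAt_of_dominated (bound := fun z => (1 + (x + 1) ^ 2) * min 1 (z ^ 2))
    · exact Eventually.of_forall fun l => (lkq_meas l).aestronglyMeasurable
    · have : Iio (x + 1) ∈ nhdsWithin x (Ici 0) := mem_nhdsWithin_of_mem_nhds (Iio_mem_nhds (by linarith))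
      filter_upwards [this, self_mem_nhdsWithin] with l hl hl0
      filter_upwards [bm_ae_pos hφ] with z hz
      refine (lkq_abs_le z l hz hl0).trans ?_
      have h1 : (0:ℝ) ≤ min 1 (z ^ 2) := by positivity
      have h2 : l ^ 2 ≤ (x + 1) ^ 2 := by
        have := mem_Ici.1 hl0; have := mem_Iio.1 hl; gcongr
      gcongr
    · exact (bm_int hφ).const_mul _
    · refine ae_of_all _ fun z => ?_
      apply Continuous.continuousWithinAt
      unfold lkq
      split_ifs <;> fun_prop
  exact this.congr fun l hl => bm_form hφ l hl

lemma bm_low (hφ : IsBranchingMechanism φ β σ m) : ∃ A, 0 ≤ A ∧ ∀ l, 0 ≤ l → -(A * (1 + l)) ≤ φ l := by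
  set N := ∫ z, min 1 (z ^ 2) ∂m
  have hN : 0 ≤ N := integral_nonneg fun z => by positivity
  refine ⟨|β| + N, by positivity, fun l hl => ?_⟩
  rw [bm_form hφ l hl]
  have h1 : -N ≤ ∫ z, lkq z l ∂m := by
    rw [← integral_neg]
    apply integral_mono_ae (bm_int hφ).neg (bm_lkq_int hφ l hl)
    filter_upwards [bm_ae_pos hφ] with z hz
    exact lkq_ge z l hz
  have h2 : -(|β| * l) ≤ β * l := by nlinarith [neg_abs_le β]
  have h3 : 0 ≤ σ ^ 2 * l ^ 2 / 2 := by positivity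
  nlinarith [abs_nonneg β, mul_nonneg hN hl]

lemma bm_up (hφ : IsBranchingMechanism φ β σ m) (B : ℝ) :
    ∃ C, 0 ≤ C ∧ ∀ l, 0 ≤ l → l ≤ B → φ l ≤ C * l := by
  set N := ∫ z, min 1 (z ^ 2) ∂m
  have hN : 0 ≤ N := integral_nonneg fun z => by positivity
  refine ⟨|β| + (σ ^ 2 / 2 + N) * |B|, by positivity, fun l hl hB => ?_⟩
  rw [bm_form hφ l hl]
  have h1 : ∫ z, lkq z l ∂m ≤ l ^ 2 * N := by
    rw [← integral_const_mul]
    apply integral_mono_ae (bm_lkq_int hφ l hl) ((bm_int hφ).const_mul _)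
    filter_upwards [bm_ae_pos hφ] with z hz
    exact lkq_le z l hz hl
  have h2 : β * l ≤ |β| * l := by nlinarith [le_abs_self β]
  have h4 : l ^ 2 ≤ |B| * l := by nlinarith [le_abs_self B]
  have h5 : (σ ^ 2 / 2 + N) * l ^ 2 ≤ (σ ^ 2 / 2 + N) * (|B| * l) := by gcongr
  nlinarith

lemma bm_lip (hφ : IsBranchingMechanism φ β σ m) (a b : ℝ) (ha : 0 < a) (hab : a ≤ b) :
    ∃ C : NNReal, LipschitzOnWith C φ (Icc a b) := by
  set N := ∫ z, min 1 (z ^ 2) ∂m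
  have hN : 0 ≤ N := integral_nonneg fun z => by positivity
  have hb : 0 < b := ha.trans_le hab
  set C := |β| + σ ^ 2 * b + (b + a⁻¹) * N
  have hC : 0 ≤ C := by positivity
  refine ⟨⟨C, hC⟩, LipschitzOnWith.of_dist_le_mul fun l hl l' hl' => ?_⟩
  simp only [Real.dist_eq]
  have hl0 := ha.le.trans hl.1
  have hl0' := ha.le.trans hl'.1
  rw [bm_form hφ l hl0, bm_form hφ l' hl0']
  have h1 : |(∫ z, lkq z l ∂m) - ∫ z, lkq z l' ∂m| ≤ (b + a⁻¹) * N * |l - l'| := by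
    rw [← integral_sub (bm_lkq_int hφ l hl0) (bm_lkq_int hφ l' hl0')]
    have h2 : (b + a⁻¹) * N * |l - l'| = ∫ z, (b + a⁻¹) * |l - l'| * min 1 (z ^ 2) ∂m := by
      rw [integral_const_mul]; ring
    rw [h2, ← Real.norm_eq_abs]
    apply norm_integral_le_of_norm_le ((bm_int hφ).const_mul _)
    filter_upwards [bm_ae_pos hφ] with z hz
    rw [Real.norm_eq_abs]
    refine (lkq_lip z a b l l' hz ha hl hl').trans (le_of_eq (by ring))
  have h3 : β * l + σ ^ 2 * l ^ 2 / 2 + (∫ z, lkq z l ∂m) - (β * l' + σ ^ 2 * l' ^ 2 / 2 + ∫ z, lkq z l' ∂m)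
    = (β + σ ^ 2 * ((l + l') / 2)) * (l - l') + ((∫ z, lkq z l ∂m) - ∫ z, lkq z l' ∂m) := by ring
  rw [h3]
  refine (abs_add_le _ _).trans ?_
  rw [abs_mul]
  have h4 : |β + σ ^ 2 * ((l + l') / 2)| ≤ |β| + σ ^ 2 * b := by
    refine (abs_add_le _ _).trans ?_
    rw [abs_of_nonneg (a := σ ^ 2 * ((l + l') / 2)) (by positivity)]
    have : (l + l') / 2 ≤ b := by linarith [hl.2, hl'.2]
    gcongr
  calc _ ≤ (|β| + σ ^ 2 * b) * |l - l'| + (b + a⁻¹) * N * |l - l'| := by gcongr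
    _ = C * |l - l'| := by ring

end phi

section psi
variable {ψ : ℝ → ℝ} {h : ℝ} {ν : Measure ℝ}

lemma im_ae_pos (hψ : IsImmigrationMechanism ψ h ν) : ∀ᵐ z ∂ν, 0 < z := by
  rw [ae_iff]; simpa [Set.Iic, not_lt] using hψ.carrier

lemma im_int (hψ : IsImmigrationMechanism ψ h ν) : Integrable (fun z : ℝ => min 1 z) ν := by
  refine ⟨by fun_prop, ?_⟩
  rw [hasFiniteIntegral_iff_ofReal]
  · exact hψ.levy_finite
  · filter_upwards [im_ae_pos hψ] with z hz
    simp [hz.le]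

lemma im_abs_le (z l : ℝ) (hz : 0 < z) (hl : 0 ≤ l) : |1 - Real.exp (-(l * z))| ≤ (1 + l) * min 1 z := by
  have hzl : 0 ≤ l * z := by positivity
  have h2 := Real.add_one_le_exp (-(l * z))
  have h1 := Real.exp_pos (-(l * z))
  have h3 : Real.exp (-(l * z)) ≤ 1 := Real.exp_le_one_iff.2 (by linarith)
  rw [abs_of_nonneg (by linarith)]
  rcases le_total 1 z with h | h
  · rw [min_eq_left h]; linarith
  · rw [min_eq_right h]; linarith

lemma im_exp_int (hψ : IsImmigrationMechanism ψ h ν) (l : ℝ) (hl : 0 ≤ l) :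
    Integrable (fun z => 1 - Real.exp (-(l * z))) ν := by
  refine ((im_int hψ).const_mul (1 + l)).mono' (by fun_prop) ?_
  filter_upwards [im_ae_pos hψ] with z hz
  exact im_abs_le z l hz hl

lemma im_zero (hψ : IsImmigrationMechanism ψ h ν) : ψ 0 = 0 := by
  rw [hψ.form 0 le_rfl]; simp

lemma im_cont (hψ : IsImmigrationMechanism ψ h ν) : ContinuousOn ψ (Ici 0) := by
  have : ContinuousOn (fun l => h * l + ∫ z, (1 - Real.exp (-(l * z))) ∂ν) (Ici 0) := by
    apply ContinuousOn.add (by fun_prop)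
    intro x hx
    apply continuousWithinAt_of_dominated (bound := fun z => (1 + (x + 1)) * min 1 z)
    · exact Eventually.of_forall fun l => by fun_prop
    · have : Iio (x + 1) ∈ nhdsWithin x (Ici 0) := mem_nhdsWithin_of_mem_nhds (Iio_mem_nhds (by linarith))
      filter_upwards [this, self_mem_nhdsWithin] with l hl hl0
      filter_upwards [im_ae_pos hψ] with z hz
      refine (im_abs_le z l hz hl0).trans ?_
      have h1 : (0:ℝ) ≤ min 1 z := by positivity
      have := mem_Iio.1 hl
      gcongr
    · exact (im_int hψ).const_mul _
    · refine ae_of_all _ fun z => ?_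
      apply Continuous.continuousWithinAt
      fun_prop
  exact this.congr fun l hl => hψ.form l hl

end psi


lemma gronwall_right {V V' : ℝ → ℝ} {a b K e : ℝ} (hab : a ≤ b) (hc : ContinuousOn V (Icc a b))
    (hd : ∀ x ∈ Ico a b, HasDerivWithinAt V (V' x) (Ici x) x)
    (hb : ∀ x ∈ Ico a b, V' x ≤ K * V x + e) :
    V b ≤ gronwallBound (V a) K e (b - a) :=
  le_gronwallBound_of_liminf_deriv_right_le hc
    (fun x hx _ hr => (hd x hx).liminf_right_slope_le hr) le_rfl hb b ⟨hab, le_rfl⟩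

lemma primitive_facts (k w : ℝ → ℝ) (l T : ℝ) (hT : 0 < T) (hk : ContinuousOn k (Icc 0 T))
    (hw : ∀ t, t ∈ Icc 0 T → w t = l + ∫ s in (0:ℝ)..t, k s) :
    ∀ t ∈ Ico 0 T, HasDerivWithinAt w (k t) (Ici t) t := by
  intro t ht
  set k' : ℝ → ℝ := fun s => k (max 0 (min s T)) with hk'
  have hk'c : Continuous k' := by
    apply hk.comp_continuous (by fun_prop)
    intro s
    exact ⟨le_max_left _ _, max_le hT.le (min_le_right _ _)⟩
  have heq : ∀ s ∈ Icc 0 T, k' s = k s := by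
    intro s hs
    simp only [hk', min_eq_left hs.2, max_eq_right hs.1]
  have hd : HasDerivAt (fun t => l + ∫ s in (0:ℝ)..t, k' s) (k' t) t :=
    (intervalIntegral.integral_hasDerivAt_right (hk'c.intervalIntegrable _ _)
      (hk'c.stronglyMeasurableAtFilter _ _) hk'c.continuousAt).const_add l
  rw [heq t ⟨ht.1, ht.2.le⟩] at hd
  have hww : ∀ r ∈ Icc t T, w r = l + ∫ s in (0:ℝ)..r, k' s := by
    intro r hr
    have hr0 : 0 ≤ r := ht.1.trans hr.1
    rw [hw r ⟨hr0, hr.2⟩]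
    congr 1
    apply intervalIntegral.integral_congr
    intro s hs
    rw [uIcc_of_le hr0] at hs
    exact (heq s ⟨hs.1, hs.2.trans hr.2⟩).symm
  have h1 : HasDerivWithinAt w (k t) (Icc t T) t :=
    hd.hasDerivWithinAt.congr hww (hww t ⟨le_rfl, ht.2.le⟩)
  exact h1.mono_of_mem_nhdsWithin (Icc_mem_nhdsGE ht.2)

lemma cumul_step (φ : ℝ → ℝ) (hc : ContinuousOn φ (Ici 0)) (A : ℝ)
    (hlow : ∀ l, 0 ≤ l → -(A * (1 + l)) ≤ φ l) (w : ℝ → ℝ) (l : ℝ)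
    (hw : ∀ t, 0 ≤ t → 0 ≤ w t ∧ w t = l - ∫ s in (0:ℝ)..t, φ (w s))
    (T : ℝ) (hT : 0 < T) (hIntg : IntervalIntegrable (fun s => φ (w s)) volume 0 T) :
    ContinuousOn w (Icc 0 T) ∧ (∀ t ∈ Ico 0 T, HasDerivWithinAt w (-φ (w t)) (Ici t) t) ∧
      ∀ t ∈ Icc 0 T, w t + 1 ≤ (l + 1) * Real.exp (A * t) := by
  have hwc : ContinuousOn w (Icc 0 T) := by
    have h1 := intervalIntegral.continuousOn_primitive_interval (a := 0) (b := T)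
      (f := fun s => φ (w s)) (μ := volume)
      (by rw [uIcc_of_le hT.le, integrableOn_Icc_iff_integrableOn_Ioc]
          exact (intervalIntegrable_iff_integrableOn_Ioc_of_le hT.le).1 hIntg)
    rw [uIcc_of_le hT.le] at h1
    exact (continuousOn_const.sub h1).congr fun t ht => (hw t ht.1).2
  have hd : ∀ t ∈ Ico 0 T, HasDerivWithinAt w (-φ (w t)) (Ici t) t := by
    apply primitive_facts (fun t => -φ (w t)) w l T hT
    · apply ContinuousOn.neg
      exact hc.comp hwc fun t ht => (hw t ht.1).1
    · intro t ht
      rw [(hw t ht.1).2, intervalIntegral.integral_neg, sub_eq_add_neg]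
  refine ⟨hwc, hd, fun t ht => ?_⟩
  have h0 : w 0 = l := by have := (hw 0 le_rfl).2; simpa using this
  have := gronwall_right (V := fun t => w t + 1) (V' := fun t => -φ (w t)) (K := A) (e := 0) ht.1
    ((hwc.mono (Icc_subset_Icc_right ht.2)).add continuousOn_const)
    (fun x hx => (hd x ⟨hx.1, hx.2.trans_le ht.2⟩).add_const 1)
    (fun x hx => by have := hlow (w x) (hw x hx.1).1; linarith)
  rw [gronwallBound_ε0, h0, sub_zero] at this
  exact this

lemma cumul_integrable (φ : ℝ → ℝ) (hc : ContinuousOn φ (Ici 0)) (A : ℝ) (hA : 0 ≤ A)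
    (hlow : ∀ l, 0 ≤ l → -(A * (1 + l)) ≤ φ l) (w : ℝ → ℝ) (l : ℝ) (hl : 0 < l)
    (hw : ∀ t, 0 ≤ t → 0 ≤ w t ∧ w t = l - ∫ s in (0:ℝ)..t, φ (w s))
    (T : ℝ) (hT : 0 < T) : IntervalIntegrable (fun s => φ (w s)) volume 0 T := by
  by_contra hno
  set S : Set ℝ := {t | t ∈ Icc 0 T ∧ IntervalIntegrable (fun s => φ (w s)) volume 0 t} with hS
  have h0S : (0:ℝ) ∈ S := ⟨⟨le_rfl, hT.le⟩, IntervalIntegrable.refl⟩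
  have hbdd : BddAbove S := ⟨T, fun t ht => ht.1.2⟩
  set τ := sSup S with hτ
  have hτ0 : 0 ≤ τ := le_csSup hbdd h0S
  have hτT : τ ≤ T := csSup_le ⟨0, h0S⟩ fun t ht => ht.1.2
  have hlt : ∀ t, 0 ≤ t → t < τ → IntervalIntegrable (fun s => φ (w s)) volume 0 t := by
    intro t ht0 ht
    obtain ⟨s, hs, hts⟩ := exists_lt_of_lt_csSup ⟨0, h0S⟩ ht
    apply hs.2.mono_set
    rw [uIcc_of_le ht0, uIcc_of_le hs.1.1]
    exact Icc_subset_Icc_right hts.le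
  have hgt : ∀ t, τ < t → t ≤ T → w t = l := by
    intro t ht htT
    rw [(hw t (by linarith)).2, intervalIntegral.integral_undef, sub_zero]
    intro hI
    have : t ≤ τ := le_csSup hbdd ⟨⟨by linarith, htT⟩, hI⟩
    linarith
  set B := (l + 1) * Real.exp (A * T) with hB
  have hBl : l ≤ B := by
    have : 1 ≤ Real.exp (A * T) := Real.one_le_exp (by positivity)
    nlinarith
  have hwb : ∀ t, 0 < t → t < τ → w t ≤ B := by
    intro t ht0 ht
    have h1 := (cumul_step φ hc A hlow w l hw t ht0 (hlt t ht0.le ht)).2.2 t ⟨ht0.le, le_rfl⟩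
    have h2 : Real.exp (A * t) ≤ Real.exp (A * T) := by
      apply Real.exp_le_exp.2; apply mul_le_mul_of_nonneg_left _ hA; linarith
    nlinarith
  obtain ⟨C, hC⟩ := (isCompact_Icc (a := (0:ℝ)) (b := B)).exists_bound_of_continuousOn
    (hc.mono fun x hx => hx.1)
  have hwc : ContinuousOn w (Ioo 0 τ) := by
    intro t ht
    obtain ⟨t', ht1, ht2⟩ := exists_between ht.2
    have h1 := (cumul_step φ hc A hlow w l hw t' (ht.1.trans ht1) (hlt t' (ht.1.trans ht1).le ht2)).1
    exact (h1.continuousAt (Icc_mem_nhds ht.1 ht1)).continuousWithinAt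
  apply hno
  rw [intervalIntegrable_iff_integrableOn_Ioc_of_le hT.le]
  have hsub : Ioc 0 T ⊆ (Ioo 0 τ ∪ {τ}) ∪ Ioc τ T := by
    intro t ht
    rcases lt_trichotomy t τ with h | h | h
    · exact Or.inl (Or.inl ⟨ht.1, h⟩)
    · exact Or.inl (Or.inr h)
    · exact Or.inr ⟨h, ht.2⟩
  refine IntegrableOn.mono_set ?_ hsub
  refine (IntegrableOn.union ?_ ?_).union ?_
  · refine Integrable.of_bound ?_ C ?_
    · exact (hc.comp hwc fun t ht => (hw t ht.1.le).1).aestronglyMeasurable measurableSet_Ioo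
    · filter_upwards [ae_restrict_mem measurableSet_Ioo] with t ht
      exact hC _ ⟨(hw t ht.1.le).1, hwb t ht.1 ht.2⟩
  · have hx : volume ({τ} : Set ℝ) < ⊤ := by rw [Real.volume_singleton]; simp
    exact integrableOn_singleton (hx := hx)
  · have : IntegrableOn (fun _ : ℝ => φ l) (Ioc τ T) volume := by simp
    exact this.congr_fun (fun t ht => by simp only [hgt t ht.1 ht.2]) measurableSet_Ioc

/-- The facts about `w = v · l`. -/
structure CumFacts (φ w : ℝ → ℝ) (l : ℝ) : Prop where
  zero : w 0 = l
  cont : ContinuousOn w (Ici 0)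
  pos : ∀ t, 0 ≤ t → 0 < w t
  deriv : ∀ t, 0 ≤ t → HasDerivWithinAt w (-φ (w t)) (Ici t) t

lemma cumul_facts {φ : ℝ → ℝ} {β σ : ℝ} {m : Measure ℝ} (hφ : IsBranchingMechanism φ β σ m)
    {v : ℝ → ℝ → ℝ} (hv : IsCumulant φ v) (l : ℝ) (hl : 0 < l) : CumFacts φ (fun t => v t l) l := by
  have hc := bm_cont hφ
  obtain ⟨A, hA, hlow⟩ := bm_low hφ
  have hw := hv l hl.le
  have hIntg := cumul_integrable φ hc A hA hlow (fun t => v t l) l hl hw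
  have hstep := fun T hT => cumul_step φ hc A hlow (fun t => v t l) l hw T hT (hIntg T hT)
  have h0 : v 0 l = l := by have := (hw 0 le_rfl).2; simpa using this
  refine ⟨h0, ?_, ?_, ?_⟩
  · intro t ht
    have h1 := (hstep (t + 1) (by have := mem_Ici.1 ht; linarith)).1 t ⟨ht, by linarith⟩
    apply h1.mono_of_mem_nhdsWithin
    rw [show Icc 0 (t + 1) = Ici 0 ∩ Iic (t + 1) from rfl]
    exact inter_mem self_mem_nhdsWithin (mem_nhdsWithin_of_mem_nhds (Iic_mem_nhds (by linarith)))
  · intro t ht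
    obtain ⟨h1, h2, h3⟩ := hstep (t + 1) (by linarith)
    obtain ⟨C, hC, hup⟩ := bm_up hφ ((l + 1) * Real.exp (A * (t + 1)))
    have := gronwall_right (V := fun s => -v s l) (V' := fun s => - -φ (v s l)) (K := -C) (e := 0) ht
      ((h1.mono (Icc_subset_Icc_right (by linarith))).neg)
      (fun x hx => (h2 x ⟨hx.1, by linarith [hx.2]⟩).neg)
      (fun x hx => by
        have h4 := h3 x ⟨hx.1, by linarith [hx.2]⟩
        have h5 : Real.exp (A * x) ≤ Real.exp (A * (t + 1)) := by
          apply Real.exp_le_exp.2; apply mul_le_mul_of_nonneg_left _ hA; linarith [hx.2]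
        have := hup (v x l) (hw x hx.1).1 (by nlinarith)
        linarith)
    rw [gronwallBound_ε0, h0] at this
    have h6 : 0 < l * Real.exp (-C * (t - 0)) := by positivity
    linarith
  · intro t ht
    exact (hstep (t + 1) (by linarith)).2.1 t ⟨ht, by linarith⟩

lemma cumul_semigroup {φ : ℝ → ℝ} {β σ : ℝ} {m : Measure ℝ} (hφ : IsBranchingMechanism φ β σ m)
    {v : ℝ → ℝ → ℝ} (hv : IsCumulant φ v) (l : ℝ) (hl : 0 < l) (t s : ℝ) (ht : 0 ≤ t) (hs : 0 ≤ s) :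
    v (t + s) l = v t (v s l) := by
  have h1 := cumul_facts hφ hv l hl
  have hp := h1.pos s hs
  have h2 := cumul_facts hφ hv (v s l) hp
  have hcf : ContinuousOn (fun r => v (r + s) l) (Icc 0 t) :=
    h1.cont.comp (by fun_prop) fun r hr => by
      have := hr.1; simp only [mem_Ici]; linarith
  have hcg : ContinuousOn (fun r => v r (v s l)) (Icc 0 t) := h2.cont.mono fun r hr => hr.1
  obtain ⟨a, ha, hab⟩ : ∃ a, 0 < a ∧ ∀ r ∈ Icc 0 t, a ≤ v (r + s) l ∧ a ≤ v r (v s l) := by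
    obtain ⟨x1, hx1, hm1⟩ := (isCompact_Icc (a := (0:ℝ)) (b := t)).exists_isMinOn ⟨0, by simp [ht]⟩ hcf
    obtain ⟨x2, hx2, hm2⟩ := (isCompact_Icc (a := (0:ℝ)) (b := t)).exists_isMinOn ⟨0, by simp [ht]⟩ hcg
    refine ⟨min (v (x1 + s) l) (v x2 (v s l)), lt_min (h1.pos _ (by linarith [hx1.1])) (h2.pos _ hx2.1), ?_⟩
    intro r hr
    exact ⟨(min_le_left _ _).trans (hm1 hr), (min_le_right _ _).trans (hm2 hr)⟩
  obtain ⟨b, hbb⟩ : ∃ b, ∀ r ∈ Icc 0 t, v (r + s) l ≤ b ∧ v r (v s l) ≤ b := by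
    obtain ⟨x1, hx1, hm1⟩ := (isCompact_Icc (a := (0:ℝ)) (b := t)).exists_isMaxOn ⟨0, by simp [ht]⟩ hcf
    obtain ⟨x2, hx2, hm2⟩ := (isCompact_Icc (a := (0:ℝ)) (b := t)).exists_isMaxOn ⟨0, by simp [ht]⟩ hcg
    refine ⟨max (v (x1 + s) l) (v x2 (v s l)), ?_⟩
    intro r hr
    exact ⟨(hm1 hr : _ ≤ _).trans (le_max_left _ _), (hm2 hr : _ ≤ _).trans (le_max_right _ _)⟩
  obtain ⟨C, hC⟩ := bm_lip hφ a b ha ((hab 0 ⟨le_rfl, ht⟩).1.trans (hbb 0 ⟨le_rfl, ht⟩).1)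
  have hCn : LipschitzOnWith C (fun x => -φ x) (Icc a b) := by
    apply LipschitzOnWith.of_dist_le_mul
    intro x hx y hy
    simpa only [dist_neg_neg] using hC.dist_le_mul x hx y hy
  refine ODE_solution_unique_of_mem_Icc_right (v := fun _ x => -φ x) (s := fun _ => Icc a b) (K := C)
    (fun _ _ => hCn) hcf ?_ ?_ hcg ?_ ?_ ?_ (⟨ht, le_rfl⟩ : t ∈ Icc 0 t)
  · intro r hr
    have h3 := h1.deriv (r + s) (by linarith [hr.1])
    have h4 : HasDerivWithinAt (fun r : ℝ => r + s) 1 (Ici r) r := ((hasDerivAt_id' r).add_const s).hasDerivWithinAt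
    have := HasDerivWithinAt.comp r h3 h4 (fun x hx => by simp only [mem_Ici] at hx ⊢; linarith)
    rw [mul_one] at this
    exact this
  · intro r hr
    have hr' : r ∈ Icc 0 t := ⟨hr.1, hr.2.le⟩
    exact ⟨(hab r hr').1, (hbb r hr').1⟩
  · intro r hr
    exact h2.deriv r hr.1
  · intro r hr
    have hr' : r ∈ Icc 0 t := ⟨hr.1, hr.2.le⟩
    exact ⟨(hab r hr').2, (hbb r hr').2⟩
  · simp only [zero_add]
    exact h2.zero.symm


lemma q_ae {q : Measure ℝ} (h : q (Iio 0) = 0) : ∀ᵐ y ∂q, 0 ≤ y := by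
  rw [ae_iff]; simpa [Set.Iio, not_le] using h

lemma bdd_int {q : Measure ℝ} [IsProbabilityMeasure q] (h0 : q (Iio 0) = 0) {F : ℝ → ℝ}
    (hF : Measurable F) {C : ℝ} (hC : ∀ y, 0 ≤ y → |F y| ≤ C) : Integrable F q := by
  refine Integrable.of_bound hF.aestronglyMeasurable C ?_
  filter_upwards [q_ae h0] with y hy
  exact hC y hy

lemma y_exp_le (a y : ℝ) (ha : 0 < a) : y * Real.exp (-(a * y)) ≤ 1 / a := by
  have h1 := Real.add_one_le_exp (a * y)
  rw [Real.exp_neg, le_div_iff₀ ha]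
  have h2 := Real.exp_pos (a * y)
  rw [show y * (Real.exp (a * y))⁻¹ * a = (a * y) / Real.exp (a * y) by rw [div_eq_mul_inv]; ring, div_le_one h2]
  linarith

lemma laplace_deriv {q : Measure ℝ} [IsProbabilityMeasure q] (h0 : q (Iio 0) = 0) (l : ℝ) (hl : 0 < l) :
    HasDerivAt (fun l => ∫ y, Real.exp (-(l * y)) ∂q) (∫ y, -(y * Real.exp (-(l * y))) ∂q) l := by
  have := hasDerivAt_integral_of_dominated_loc_of_deriv_le (μ := q) (x₀ := l) (s := Ioi (l / 2))
    (F := fun l y => Real.exp (-(l * y))) (F' := fun l y => -(y * Real.exp (-(l * y))))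
    (bound := fun _ => 2 / l) (Ioi_mem_nhds (by linarith))
    (Eventually.of_forall fun l => by fun_prop)
    (bdd_int h0 (C := 1) (by fun_prop) (fun y hy => by
      rw [abs_of_pos (Real.exp_pos _)]; apply Real.exp_le_one_iff.2; have : 0 ≤ l * y := by positivity
      linarith)) (by fun_prop) ?_ (integrable_const _) ?_
  · exact this.2
  · filter_upwards [q_ae h0] with y hy a ha
    have ha : l / 2 < a := ha
    rw [norm_neg, Real.norm_eq_abs, abs_of_nonneg (by positivity)]
    refine (y_exp_le a y (by linarith)).trans ?_
    rw [div_le_div_iff₀ (by linarith) hl]; linarith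
  · refine Eventually.of_forall fun y a _ => ?_
    have : HasDerivAt (fun l : ℝ => -(l * y)) (-(1 * y)) a := ((hasDerivAt_id' a).mul_const y).neg
    exact this.exp.congr_deriv (by ring)

section
variable {φ : ℝ → ℝ} {β σ : ℝ} {m : Measure ℝ} {ψ : ℝ → ℝ} {h : ℝ} {ν : Measure ℝ}
  {v : ℝ → ℝ → ℝ} {Qγ : ℝ → ℝ → Measure ℝ}

lemma psiv_cont (hφ : IsBranchingMechanism φ β σ m) (hψ : IsImmigrationMechanism ψ h ν)
    (hv : IsCumulant φ v) (l : ℝ) (hl : 0 < l) : ContinuousOn (fun s => ψ (v s l)) (Ici 0) :=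
  (im_cont hψ).comp (cumul_facts hφ hv l hl).cont fun t ht => ((cumul_facts hφ hv l hl).pos t ht).le

lemma psiv_int (hφ : IsBranchingMechanism φ β σ m) (hψ : IsImmigrationMechanism ψ h ν)
    (hv : IsCumulant φ v) (l : ℝ) (hl : 0 < l) (a b : ℝ) (ha : 0 ≤ a) (hb : 0 ≤ b) :
    IntervalIntegrable (fun s => ψ (v s l)) volume a b := by
  apply ContinuousOn.intervalIntegrable
  apply (psiv_cont hφ hψ hv l hl).mono
  intro x hx
  exact (le_min ha hb).trans hx.1

lemma imm_semigroup (hφ : IsBranchingMechanism φ β σ m) (hψ : IsImmigrationMechanism ψ h ν)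
    (hv : IsCumulant φ v) (l : ℝ) (hl : 0 < l) (t s : ℝ) (ht : 0 ≤ t) (hs : 0 ≤ s) :
    ∫ r in (0:ℝ)..(t + s), ψ (v r l) =
      (∫ r in (0:ℝ)..s, ψ (v r l)) + ∫ r in (0:ℝ)..t, ψ (v r (v s l)) := by
  rw [← intervalIntegral.integral_add_adjacent_intervals (psiv_int hφ hψ hv l hl 0 s le_rfl hs)
    (psiv_int hφ hψ hv l hl s (t + s) hs (by linarith))]
  congr 1
  have h1 := intervalIntegral.integral_comp_add_right (fun r => ψ (v r l)) (a := 0) (b := t) s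
  rw [zero_add] at h1
  rw [← h1]
  apply intervalIntegral.integral_congr
  intro r hr
  rw [uIcc_of_le ht] at hr
  simp only
  rw [cumul_semigroup hφ hv l hl r s hr.1 hs]

lemma imm_deriv0 (hφ : IsBranchingMechanism φ β σ m) (hψ : IsImmigrationMechanism ψ h ν)
    (hv : IsCumulant φ v) (l : ℝ) (hl : 0 < l) :
    HasDerivWithinAt (fun s => ∫ r in (0:ℝ)..s, ψ (v r l)) (ψ l) (Ici 0) 0 := by
  have := primitive_facts (fun s => ψ (v s l)) (fun s => ∫ r in (0:ℝ)..s, ψ (v r l)) 0 1 one_pos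
    ((psiv_cont hφ hψ hv l hl).mono fun x hx => hx.1) (fun t _ => by simp) 0 ⟨le_rfl, one_pos⟩
  rw [(cumul_facts hφ hv l hl).zero] at this
  exact this

lemma imm_cont (hφ : IsBranchingMechanism φ β σ m) (hψ : IsImmigrationMechanism ψ h ν)
    (hv : IsCumulant φ v) (l : ℝ) (hl : 0 < l) :
    ContinuousOn (fun s => ∫ r in (0:ℝ)..s, ψ (v r l)) (Ici 0) := by
  intro t ht
  have ht : 0 ≤ t := ht
  have h1 := intervalIntegral.continuousOn_primitive_interval (a := 0) (b := t + 1)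
      (f := fun s => ψ (v s l)) (μ := volume)
      (by rw [uIcc_of_le (by linarith), integrableOn_Icc_iff_integrableOn_Ioc]
          exact (intervalIntegrable_iff_integrableOn_Ioc_of_le (by linarith)).1
            (psiv_int hφ hψ hv l hl 0 (t + 1) le_rfl (by linarith)))
  rw [uIcc_of_le (by linarith)] at h1
  apply (h1 t ⟨ht, by linarith⟩).mono_of_mem_nhdsWithin
  rw [show Icc 0 (t + 1) = Ici 0 ∩ Iic (t + 1) from rfl]
  exact inter_mem self_mem_nhdsWithin (mem_nhdsWithin_of_mem_nhds (Iic_mem_nhds (by linarith)))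

lemma lap_cont (hφ : IsBranchingMechanism φ β σ m) (hψ : IsImmigrationMechanism ψ h ν)
    (hv : IsCumulant φ v) (hQ : IsCBISemigroup v ψ Qγ) (x : ℝ) (hx : 0 ≤ x) (l : ℝ) (hl : 0 < l) :
    ContinuousOn (fun t => ∫ y, Real.exp (-(l * y)) ∂(Qγ t x)) (Ici 0) := by
  have : ContinuousOn (fun t => Real.exp (-(x * v t l) - ∫ s in (0:ℝ)..t, ψ (v s l))) (Ici 0) :=
    Real.continuous_exp.comp_continuousOn
      (((continuousOn_const.mul (cumul_facts hφ hv l hl).cont).neg).sub (imm_cont hφ hψ hv l hl))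
  exact this.congr fun t ht => (hQ t x ht hx).2.2 l hl.le

lemma lap_zero (hφ : IsBranchingMechanism φ β σ m)
    (hv : IsCumulant φ v) (hQ : IsCBISemigroup v ψ Qγ) (x : ℝ) (hx : 0 ≤ x) (l : ℝ) (hl : 0 < l) :
    ∫ y, Real.exp (-(l * y)) ∂(Qγ 0 x) = Real.exp (-(l * x)) := by
  rw [(hQ 0 x le_rfl hx).2.2 l hl.le]
  have : v 0 l = l := (cumul_facts hφ hv l hl).zero
  rw [this]; simp [mul_comm]

lemma lap_deriv (hφ : IsBranchingMechanism φ β σ m) (hψ : IsImmigrationMechanism ψ h ν)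
    (hv : IsCumulant φ v) (hQ : IsCBISemigroup v ψ Qγ) (x : ℝ) (hx : 0 ≤ x) (l : ℝ) (hl : 0 < l)
    (t : ℝ) (ht : 0 ≤ t) :
    HasDerivWithinAt (fun t => ∫ y, Real.exp (-(l * y)) ∂(Qγ t x))
      (∫ y, (φ l * y - ψ l) * Real.exp (-(l * y)) ∂(Qγ t x)) (Ici t) t := by
  have hcf := cumul_facts hφ hv l hl
  obtain ⟨hp, hq0, hlap⟩ := hQ t x ht hx
  set u : ℝ → ℝ := fun l => ∫ y, Real.exp (-(l * y)) ∂(Qγ t x) with hu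
  have hud : HasDerivAt u (∫ y, -(y * Real.exp (-(l * y))) ∂(Qγ t x)) (v 0 l) := by
    have hz : v 0 l = l := hcf.zero
    rw [hz]; exact laplace_deriv hq0 l hl
  have hvd : HasDerivWithinAt (fun s => v s l) (-φ l) (Ici 0) 0 := by
    have := hcf.deriv 0 le_rfl
    rwa [show v 0 l = l from hcf.zero] at this
  have hcomp : HasDerivWithinAt (fun s => u (v s l))
      ((∫ y, -(y * Real.exp (-(l * y))) ∂(Qγ t x)) * -φ l) (Ici 0) 0 :=
    HasDerivAt.comp_hasDerivWithinAt (h₂ := u) (h := fun s => v s l) (0 : ℝ) hud hvd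
  have hexp := (imm_deriv0 hφ hψ hv l hl).neg.exp
  have hprod := hexp.mul hcomp
  have hshift : HasDerivWithinAt (fun r : ℝ => r - t) 1 (Ici t) t :=
    ((hasDerivAt_id' t).sub_const t).hasDerivWithinAt
  have hfin := HasDerivWithinAt.comp_of_eq t hprod hshift
    (fun r hr => by simp only [mem_Ici] at hr ⊢; linarith) (by simp)
  have key : ∀ r ∈ Ici t, ∫ y, Real.exp (-(l * y)) ∂(Qγ r x) =
      Real.exp (-(∫ s in (0:ℝ)..(r - t), ψ (v s l))) * u (v (r - t) l) := by
    intro r hr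
    have hr : t ≤ r := hr
    have hs : 0 ≤ r - t := by linarith
    rw [(hQ r x (by linarith) hx).2.2 l hl.le]
    simp only [hu]
    have hvp : 0 < v (r - t) l := hcf.pos _ hs
    rw [hlap _ hvp.le, ← Real.exp_add]
    have e1 := cumul_semigroup hφ hv l hl t (r - t) ht hs
    have e2 := imm_semigroup hφ hψ hv l hl t (r - t) ht hs
    rw [add_sub_cancel] at e1 e2
    rw [e1, e2]; congr 1; ring
  have hfin2 := hfin.congr (f₁ := fun t => ∫ y, Real.exp (-(l * y)) ∂(Qγ t x)) key (key t self_mem_Ici)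
  refine hfin2.congr_deriv ?_
  have hz : v 0 l = l := hcf.zero
  simp only [Pi.neg_apply, intervalIntegral.integral_same, neg_zero, Real.exp_zero, hz, one_mul, mul_one, hu]
  have i1 : Integrable (fun y => Real.exp (-(l * y))) (Qγ t x) :=
    bdd_int hq0 (C := 1) (by fun_prop) (fun y hy => by
      rw [abs_of_pos (Real.exp_pos _)]; apply Real.exp_le_one_iff.2; have : 0 ≤ l * y := by positivity
      linarith)
  have i2 : Integrable (fun y => y * Real.exp (-(l * y))) (Qγ t x) :=
    bdd_int hq0 (C := 1 / l) (by fun_prop) (fun y hy => by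
      rw [abs_of_nonneg (by positivity)]; exact y_exp_le l y hl)
  rw [integral_neg, ← integral_const_mul, ]
  rw [show (-∫ y, y * Real.exp (-(l * y)) ∂(Qγ t x)) * -φ l = ∫ y, φ l * (y * Real.exp (-(l * y))) ∂(Qγ t x) by
    rw [integral_const_mul]; ring]
  rw [← integral_add (i1.const_mul _) (i2.const_mul _)]
  congr 1; funext y; ring
end

/-- The generator of the CBI-process, acting on a triple `(F, F1, F2)`. -/
def gen (β σ h : ℝ) (m ν : Measure ℝ) (F F1 F2 : ℝ → ℝ) (y : ℝ) : ℝ :=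
  y * (-β * F1 y + σ ^ 2 / 2 * F2 y + ∫ z, (F (y + z) - F y - (if z ≤ 1 then z * F1 y else 0)) ∂m)
    + h * F1 y + ∫ z, (F (y + z) - F y) ∂ν

/-- Admissible functions. -/
structure Adm (ε B : ℝ) (F F1 F2 : ℝ → ℝ) : Prop where
  meas : Measurable F
  b1 : ∀ y, 0 ≤ y → |F1 y| ≤ B * Real.exp (-(ε * y))
  b2 : ∀ y, 0 ≤ y → |F2 y| ≤ B * Real.exp (-(ε * y))
  j0 : ∀ y z, 0 ≤ y → 0 ≤ z → |F (y + z) - F y| ≤ B * Real.exp (-(ε * y))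
  j1 : ∀ y z, 0 ≤ y → 0 ≤ z → |F (y + z) - F y| ≤ B * Real.exp (-(ε * y)) * z
  j2 : ∀ y z, 0 ≤ y → 0 ≤ z → |F (y + z) - F y - z * F1 y| ≤ B * Real.exp (-(ε * y)) * z ^ 2

section
variable {φ : ℝ → ℝ} {β σ : ℝ} {m : Measure ℝ} {ψ : ℝ → ℝ} {h : ℝ} {ν : Measure ℝ}
  {v : ℝ → ℝ → ℝ} {Qγ : ℝ → ℝ → Measure ℝ} {ε B : ℝ} {F F1 F2 : ℝ → ℝ}

lemma Adm.jm (hF : Adm ε B F F1 F2) (y z : ℝ) (hy : 0 ≤ y) (hz : 0 < z) :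
    |F (y + z) - F y - (if z ≤ 1 then z * F1 y else 0)| ≤ B * Real.exp (-(ε * y)) * min 1 (z ^ 2) := by
  split_ifs with h1
  · have : z ^ 2 ≤ 1 := by nlinarith
    rw [min_eq_right this]; exact hF.j2 y z hy hz.le
  · have : 1 ≤ z ^ 2 := by nlinarith
    rw [min_eq_left this, sub_zero, mul_one]; exact hF.j0 y z hy hz.le

lemma Adm.jn (hF : Adm ε B F F1 F2) (y z : ℝ) (hy : 0 ≤ y) (hz : 0 < z) :
    |F (y + z) - F y| ≤ B * Real.exp (-(ε * y)) * min 1 z := by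
  rcases le_total z 1 with h1 | h1
  · rw [min_eq_right h1]; exact hF.j1 y z hy hz.le
  · rw [min_eq_left h1, mul_one]; exact hF.j0 y z hy hz.le

lemma Adm.measm (hF : Adm ε B F F1 F2) (y : ℝ) :
    Measurable (fun z => F (y + z) - F y - (if z ≤ 1 then z * F1 y else 0)) := by
  have := hF.meas
  refine ((this.comp (measurable_const.add measurable_id)).sub measurable_const).sub ?_
  exact Measurable.ite measurableSet_Iic (by fun_prop) measurable_const

lemma Adm.intm (hF : Adm ε B F F1 F2) (hφ : IsBranchingMechanism φ β σ m) (y : ℝ) (hy : 0 ≤ y) :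
    Integrable (fun z => F (y + z) - F y - (if z ≤ 1 then z * F1 y else 0)) m := by
  refine ((bm_int hφ).const_mul (B * Real.exp (-(ε * y)))).mono' (hF.measm y).aestronglyMeasurable ?_
  filter_upwards [bm_ae_pos hφ] with z hz
  exact hF.jm y z hy hz

lemma Adm.intn (hF : Adm ε B F F1 F2) (hψ : IsImmigrationMechanism ψ h ν) (y : ℝ) (hy : 0 ≤ y) :
    Integrable (fun z => F (y + z) - F y) ν := by
  have := hF.meas
  refine ((im_int hψ).const_mul (B * Real.exp (-(ε * y)))).mono'
    ((this.comp (measurable_const.add measurable_id)).sub measurable_const).aestronglyMeasurable ?_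
  filter_upwards [im_ae_pos hψ] with z hz
  exact hF.jn y z hy hz

lemma gen_add {B' : ℝ} {R R1 R2 : ℝ → ℝ} (hF : Adm ε B F F1 F2) (hR : Adm ε B' R R1 R2)
    (hφ : IsBranchingMechanism φ β σ m) (hψ : IsImmigrationMechanism ψ h ν) (y : ℝ) (hy : 0 ≤ y) :
    gen β σ h m ν (fun y => F y + R y) (fun y => F1 y + R1 y) (fun y => F2 y + R2 y) y =
      gen β σ h m ν F F1 F2 y + gen β σ h m ν R R1 R2 y := by
  unfold gen
  have e1 : (∫ z, (F (y + z) + R (y + z) - (F y + R y) - (if z ≤ 1 then z * (F1 y + R1 y) else 0)) ∂m) =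
      (∫ z, (F (y + z) - F y - (if z ≤ 1 then z * F1 y else 0)) ∂m) +
      ∫ z, (R (y + z) - R y - (if z ≤ 1 then z * R1 y else 0)) ∂m := by
    rw [← integral_add (hF.intm hφ y hy) (hR.intm hφ y hy)]
    congr 1; funext z; split_ifs <;> ring
  have e2 : (∫ z, (F (y + z) + R (y + z) - (F y + R y)) ∂ν) =
      (∫ z, (F (y + z) - F y) ∂ν) + ∫ z, (R (y + z) - R y) ∂ν := by
    rw [← integral_add (hF.intn hψ y hy) (hR.intn hψ y hy)]
    congr 1; funext z; ring
  rw [e1, e2]; ring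

lemma gen_bound (hφ : IsBranchingMechanism φ β σ m) (hψ : IsImmigrationMechanism ψ h ν) (ε : ℝ)
    (hε : 0 < ε) : ∃ C, 0 ≤ C ∧ ∀ B F F1 F2, 0 ≤ B → Adm ε B F F1 F2 → ∀ y, 0 ≤ y →
      |gen β σ h m ν F F1 F2 y| ≤ C * B := by
  set Nm := ∫ z, min 1 (z ^ 2) ∂m with hNm
  set Nn := ∫ z, min 1 z ∂ν with hNn
  have hm : 0 ≤ Nm := integral_nonneg fun z => by positivity
  have hn : 0 ≤ Nn := integral_nonneg_of_ae <| by
    filter_upwards [im_ae_pos hψ] with z hz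
    simp only [Pi.zero_apply]; positivity
  have hh := hψ.h_nonneg
  refine ⟨(|β| + σ ^ 2 / 2 + Nm) / ε + h + Nn, by positivity, ?_⟩
  intro B F F1 F2 hB hF y hy
  set e := Real.exp (-(ε * y)) with he
  have he0 : 0 < e := Real.exp_pos _
  have he1 : e ≤ 1 := Real.exp_le_one_iff.2 (by have : 0 ≤ ε * y := by positivity
                                                linarith)
  have hye : y * e ≤ 1 / ε := y_exp_le ε y hε
  have h1 := hF.b1 y hy
  have h2 := hF.b2 y hy
  have i1 : |∫ z, (F (y + z) - F y - (if z ≤ 1 then z * F1 y else 0)) ∂m| ≤ B * e * Nm := by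
    rw [hNm, ← integral_const_mul, ← Real.norm_eq_abs]
    refine norm_integral_le_of_norm_le ((bm_int hφ).const_mul _) ?_
    filter_upwards [bm_ae_pos hφ] with z hz
    exact hF.jm y z hy hz
  have i2 : |∫ z, (F (y + z) - F y) ∂ν| ≤ B * e * Nn := by
    rw [hNn, ← integral_const_mul, ← Real.norm_eq_abs]
    refine norm_integral_le_of_norm_le ((im_int hψ).const_mul _) ?_
    filter_upwards [im_ae_pos hψ] with z hz
    exact hF.jn y z hy hz
  unfold gen
  set I := ∫ z, (F (y + z) - F y - (if z ≤ 1 then z * F1 y else 0)) ∂m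
  set J := ∫ z, (F (y + z) - F y) ∂ν
  have a1 : |-β * F1 y + σ ^ 2 / 2 * F2 y + I| ≤ (|β| + σ ^ 2 / 2 + Nm) * (B * e) := by
    calc _ ≤ |-β * F1 y| + |σ ^ 2 / 2 * F2 y| + |I| := abs_add_three _ _ _
      _ ≤ |β| * (B * e) + σ ^ 2 / 2 * (B * e) + B * e * Nm := by
        rw [abs_mul, abs_mul, abs_neg, abs_of_nonneg (by positivity : 0 ≤ σ ^ 2 / 2)]
        gcongr
      _ = _ := by ring
  calc _ ≤ |y * (-β * F1 y + σ ^ 2 / 2 * F2 y + I)| + |h * F1 y| + |J| := abs_add_three _ _ _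
    _ ≤ y * ((|β| + σ ^ 2 / 2 + Nm) * (B * e)) + h * (B * e) + B * e * Nn := by
      rw [abs_mul, abs_mul, abs_of_nonneg hy, abs_of_nonneg hh]
      gcongr
    _ = (y * e) * ((|β| + σ ^ 2 / 2 + Nm) * B) + e * (h * B + B * Nn) := by ring
    _ ≤ (1 / ε) * ((|β| + σ ^ 2 / 2 + Nm) * B) + 1 * (h * B + B * Nn) := by gcongr
    _ = _ := by ring

lemma gen_exp (hφ : IsBranchingMechanism φ β σ m) (hψ : IsImmigrationMechanism ψ h ν) (a l : ℝ)
    (hl : 0 ≤ l) (F F1 F2 : ℝ → ℝ) (y : ℝ) (hF : ∀ y, F y = a * Real.exp (-(l * y)))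
    (hF1 : F1 y = -(l * (a * Real.exp (-(l * y))))) (hF2 : F2 y = l ^ 2 * (a * Real.exp (-(l * y)))) :
    gen β σ h m ν F F1 F2 y = a * ((φ l * y - ψ l) * Real.exp (-(l * y))) := by
  unfold gen
  have e1 : (∫ z, (F (y + z) - F y - (if z ≤ 1 then z * F1 y else 0)) ∂m) =
      a * Real.exp (-(l * y)) * ∫ z, lkq z l ∂m := by
    rw [← integral_const_mul]
    congr 1; funext z
    rw [hF, hF, hF1, lkq, mul_add l, neg_add, Real.exp_add, mul_comm l z]
    split_ifs <;> ring
  have e2 : (∫ z, (F (y + z) - F y) ∂ν) =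
      -(a * Real.exp (-(l * y))) * ∫ z, (1 - Real.exp (-(l * z))) ∂ν := by
    rw [← integral_const_mul]
    congr 1; funext z
    rw [hF, hF, mul_add l, neg_add, Real.exp_add]
    ring
  rw [e1, e2, hF1, hF2, bm_form hφ l hl, hψ.form l hl]; ring

lemma taylor1 {g g1 g2 : ℝ → ℝ} (hg : ∀ u, HasDerivAt g (g1 u) u) (hg1 : ∀ u, HasDerivAt g1 (g2 u) u)
    {B : ℝ} (hB2 : ∀ u ∈ Icc (0:ℝ) 1, |g2 u| ≤ B) (hB : 0 ≤ B) (a b : ℝ) (ha : a ∈ Icc (0:ℝ) 1) (hb : b ∈ Icc (0:ℝ) 1) :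
    |g a - g b - g1 b * (a - b)| ≤ B * (a - b) ^ 2 := by
  have hseg : uIcc b a ⊆ Icc 0 1 := by
    intro u hu; exact ⟨(le_min hb.1 ha.1).trans hu.1, hu.2.trans (max_le hb.2 ha.2)⟩
  have h1 : ∀ u ∈ uIcc b a, |g1 u - g1 b| ≤ B * |a - b| := by
    intro u hu
    have := Convex.norm_image_sub_le_of_norm_hasDerivWithin_le (f := g1) (f' := g2) (C := B)
      (s := Icc 0 1) (fun x _ => (hg1 x).hasDerivWithinAt) hB2 (convex_Icc 0 1) hb (hseg hu)
    refine this.trans ?_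
    rw [Real.norm_eq_abs]
    exact mul_le_mul_of_nonneg_left (abs_sub_left_of_mem_uIcc hu) hB
  have := Convex.norm_image_sub_le_of_norm_hasDerivWithin_le (f := fun u => g u - g1 b * u)
    (f' := fun u => g1 u - g1 b) (C := B * |a - b|) (s := uIcc b a)
    (fun x _ => by
      have := (hg x).sub ((hasDerivAt_id' x).const_mul (g1 b))
      rw [mul_one] at this
      exact this.hasDerivWithinAt) h1 (convex_uIcc b a) left_mem_uIcc right_mem_uIcc
  simp only [Real.norm_eq_abs] at this
  rw [show g a - g b - g1 b * (a - b) = g a - g1 b * a - (g b - g1 b * b) by ring]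
  refine this.trans (le_of_eq ?_)
  rw [← sq_abs]; ring

lemma lift1 {g g1 : ℝ → ℝ} (hg : ∀ u, HasDerivAt g (g1 u) u)
    {B : ℝ} (hB2 : ∀ u ∈ Icc (0:ℝ) 1, |g1 u| ≤ B) (a b : ℝ) (ha : a ∈ Icc (0:ℝ) 1) (hb : b ∈ Icc (0:ℝ) 1) :
    |g a - g b| ≤ B * |a - b| :=
  Convex.norm_image_sub_le_of_norm_hasDerivWithin_le (f := g) (f' := g1) (C := B)
      (s := Icc 0 1) (fun x _ => (hg x).hasDerivWithinAt) hB2 (convex_Icc 0 1) hb ha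

lemma adm_lift {g g1 g2 : ℝ → ℝ} (hg : ∀ u, HasDerivAt g (g1 u) u) (hg1 : ∀ u, HasDerivAt g1 (g2 u) u)
    {B : ℝ} (hB1 : ∀ u ∈ Icc (0:ℝ) 1, |g1 u| ≤ B) (hB2 : ∀ u ∈ Icc (0:ℝ) 1, |g2 u| ≤ B)
    (hε : 0 < ε) (hε1 : ε ≤ 1) :
    Adm ε (2 * B) (fun y => g (Real.exp (-(ε * y))))
      (fun y => -(ε * Real.exp (-(ε * y)) * g1 (Real.exp (-(ε * y)))))
      (fun y => ε ^ 2 * Real.exp (-(ε * y)) * g1 (Real.exp (-(ε * y))) +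
        ε ^ 2 * Real.exp (-(ε * y)) ^ 2 * g2 (Real.exp (-(ε * y)))) := by
  have hB : 0 ≤ B := (abs_nonneg _).trans (hB1 0 ⟨le_rfl, zero_le_one⟩)
  have hE : ∀ y, 0 ≤ y → Real.exp (-(ε * y)) ∈ Icc (0:ℝ) 1 := fun y hy =>
    ⟨(Real.exp_pos _).le, Real.exp_le_one_iff.2 (by have : 0 ≤ ε * y := by positivity
                                                    linarith)⟩
  have hgc : Continuous g := continuous_iff_continuousAt.2 fun u => (hg u).continuousAt
  have hε2 : ε ^ 2 ≤ 1 := by nlinarith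
  have hsh : ∀ y z, 0 ≤ y → 0 ≤ z → |Real.exp (-(ε * (y + z))) - Real.exp (-(ε * y))| =
      Real.exp (-(ε * y)) * (1 - Real.exp (-(ε * z))) := by
    intro y z hy hz
    rw [mul_add, neg_add, Real.exp_add, abs_sub_comm, abs_of_nonneg]
    · ring
    · nlinarith [(hE y hy).1, (hE z hz).2]
  have h1e : ∀ z, 0 ≤ z → 1 - Real.exp (-(ε * z)) ≤ z := by
    intro z hz
    have := Real.add_one_le_exp (-(ε * z))
    nlinarith
  refine ⟨by fun_prop, ?_, ?_, ?_, ?_, ?_⟩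
  · intro y hy
    have he := hE y hy
    rw [abs_neg, abs_mul, abs_mul, abs_of_pos hε, abs_of_nonneg he.1]
    have := hB1 _ he
    calc _ ≤ 1 * Real.exp (-(ε * y)) * B := by gcongr
      _ ≤ _ := by nlinarith [he.1]
  · intro y hy
    have he := hE y hy
    refine (abs_add_le _ _).trans ?_
    rw [abs_mul, abs_mul, abs_mul, abs_mul, abs_of_nonneg (sq_nonneg ε), abs_of_nonneg he.1, abs_of_nonneg (sq_nonneg (Real.exp (-(ε * y))))]
    have := hB1 _ he
    have h3 := hB2 _ he
    have h4 : Real.exp (-(ε * y)) ^ 2 ≤ Real.exp (-(ε * y)) := by nlinarith [he.1, he.2]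
    calc _ ≤ 1 * Real.exp (-(ε * y)) * B + 1 * Real.exp (-(ε * y)) * B := by
          gcongr <;> exact he.1
      _ = _ := by ring
  · intro y z hy hz
    refine (lift1 hg hB1 _ _ (hE (y + z) (by positivity)) (hE y hy)).trans ?_
    rw [hsh y z hy hz]
    have he := hE y hy
    have hz' := hE z hz
    have : Real.exp (-(ε * y)) * (1 - Real.exp (-(ε * z))) ≤ Real.exp (-(ε * y)) := by nlinarith [he.1, hz'.1]
    nlinarith [he.1]
  · intro y z hy hz
    refine (lift1 hg hB1 _ _ (hE (y + z) (by positivity)) (hE y hy)).trans ?_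
    rw [hsh y z hy hz]
    have he := hE y hy
    have : Real.exp (-(ε * y)) * (1 - Real.exp (-(ε * z))) ≤ Real.exp (-(ε * y)) * z :=
      mul_le_mul_of_nonneg_left (h1e z hz) he.1
    have h5 : 0 ≤ B * (Real.exp (-(ε * y)) * z) := mul_nonneg hB (mul_nonneg he.1 hz)
    nlinarith
  · intro y z hy hz
    have he := hE y hy
    have hz' := hE z hz
    have t1 := taylor1 hg hg1 hB2 hB _ _ (hE (y + z) (by positivity)) he
    rw [← sq_abs (_ - _), hsh y z hy hz] at t1
    have hEz : Real.exp (-(ε * (y + z))) = Real.exp (-(ε * y)) * Real.exp (-(ε * z)) := by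
      rw [← Real.exp_add]; congr 1; ring
    have q1 : |Real.exp (-(ε * z)) - 1 + ε * z| ≤ z ^ 2 := by
      have a1 := Real.add_one_le_exp (-(ε * z))
      have a2 := exp_neg_le_quad (ε * z) (by positivity)
      rw [abs_of_nonneg (by linarith)]
      nlinarith [sq_nonneg z]
    have q2 : (Real.exp (-(ε * y)) * (1 - Real.exp (-(ε * z)))) ^ 2 ≤ Real.exp (-(ε * y)) * z ^ 2 := by
      have b1 : (1 - Real.exp (-(ε * z))) ^ 2 ≤ z ^ 2 := by
        apply pow_le_pow_left₀ _ (h1e z hz); linarith [hz'.2]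
      have b2 : Real.exp (-(ε * y)) ^ 2 ≤ Real.exp (-(ε * y)) := by nlinarith [he.1, he.2]
      rw [mul_pow]
      exact mul_le_mul b2 b1 (sq_nonneg _) he.1
    have g1b := hB1 _ he
    set E := Real.exp (-(ε * y))
    set e' := Real.exp (-(ε * z))
    rw [hEz] at t1 ⊢
    have key : g (E * e') - g E - z * -(ε * E * g1 E) =
        (g (E * e') - g E - g1 E * (E * e' - E)) + g1 E * E * (e' - 1 + ε * z) := by ring
    rw [key]
    refine (abs_add_le _ _).trans ?_
    have s2 : |g1 E * E * (e' - 1 + ε * z)| ≤ B * E * z ^ 2 := by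
      rw [abs_mul, abs_mul, abs_of_nonneg he.1]
      have := he.1
      gcongr
    have s1 : B * (E * (1 - e')) ^ 2 ≤ B * (E * z ^ 2) := mul_le_mul_of_nonneg_left q2 hB
    linarith
end

/-- Kolmogorov forward equation for the pair `(P, A P)`. -/
structure Kol (Qγ : ℝ → ℝ → Measure ℝ) (x : ℝ) (P A : ℝ → ℝ) : Prop where
  intP : ∀ s, 0 ≤ s → Integrable P (Qγ s x)
  intA : ∀ s, 0 ≤ s → Integrable A (Qγ s x)
  cont : ContinuousOn (fun s => ∫ y, P y ∂(Qγ s x)) (Ici 0)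
  deriv : ∀ s, 0 ≤ s → HasDerivWithinAt (fun s => ∫ y, P y ∂(Qγ s x)) (∫ y, A y ∂(Qγ s x)) (Ici s) s
  zero : ∫ y, P y ∂(Qγ 0 x) = P x

section
variable {φ : ℝ → ℝ} {β σ : ℝ} {m : Measure ℝ} {ψ : ℝ → ℝ} {h : ℝ} {ν : Measure ℝ}
  {v : ℝ → ℝ → ℝ} {Qγ : ℝ → ℝ → Measure ℝ} {ε B : ℝ} {F F1 F2 : ℝ → ℝ}

lemma Kol.add {x : ℝ} {P A P' A' : ℝ → ℝ} (h1 : Kol Qγ x P A) (h2 : Kol Qγ x P' A') :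
    Kol Qγ x (fun y => P y + P' y) (fun y => A y + A' y) := by
  have e : ∀ s ∈ Ici (0:ℝ), ∫ y, (P y + P' y) ∂(Qγ s x) = (∫ y, P y ∂(Qγ s x)) + ∫ y, P' y ∂(Qγ s x) :=
    fun s hs => integral_add (h1.intP s hs) (h2.intP s hs)
  refine ⟨fun s hs => (h1.intP s hs).add (h2.intP s hs), fun s hs => (h1.intA s hs).add (h2.intA s hs),
    (h1.cont.add h2.cont).congr e, ?_, ?_⟩
  · intro s hs
    rw [integral_add (h1.intA s hs) (h2.intA s hs)]
    exact ((h1.deriv s hs).add (h2.deriv s hs)).congr (fun r hr => e r (hs.trans hr)) (e s hs)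
  · rw [e 0 self_mem_Ici, h1.zero, h2.zero]

lemma Kol.congr {x : ℝ} {P A A' : ℝ → ℝ} (hQ : IsCBISemigroup v ψ Qγ) (hx : 0 ≤ x) (h1 : Kol Qγ x P A)
    (hA : ∀ y, 0 ≤ y → A' y = A y) : Kol Qγ x P A' := by
  have e : ∀ s, 0 ≤ s → A' =ᵐ[Qγ s x] A := by
    intro s hs
    filter_upwards [q_ae (hQ s x hs hx).2.1] with y hy
    exact hA y hy
  refine ⟨h1.intP, fun s hs => (h1.intA s hs).congr (e s hs).symm, h1.cont, ?_, h1.zero⟩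
  intro s hs
  rw [integral_congr_ae (e s hs)]; exact h1.deriv s hs

lemma kol_const (hQ : IsCBISemigroup v ψ Qγ) (x : ℝ) (hx : 0 ≤ x) (a : ℝ) :
    Kol Qγ x (fun _ => a) (fun _ => 0) := by
  have e : ∀ s ∈ Ici (0:ℝ), ∫ _, a ∂(Qγ s x) = a := by
    intro s hs
    have := (hQ s x hs hx).1
    simp
  refine ⟨fun s hs => ?_, fun s hs => integrable_zero _ _ _, continuousOn_const.congr e, ?_, e 0 self_mem_Ici⟩
  · have := (hQ s x hs hx).1
    exact integrable_const _
  · intro s hs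
    rw [integral_zero]
    exact (hasDerivWithinAt_const s _ a).congr (fun r hr => e r (hs.trans hr)) (e s hs)

lemma kol_exp (hφ : IsBranchingMechanism φ β σ m) (hψ : IsImmigrationMechanism ψ h ν)
    (hv : IsCumulant φ v) (hQ : IsCBISemigroup v ψ Qγ) (x : ℝ) (hx : 0 ≤ x) (a l : ℝ) (hl : 0 < l) :
    Kol Qγ x (fun y => a * Real.exp (-(l * y))) (fun y => a * ((φ l * y - ψ l) * Real.exp (-(l * y)))) := by
  have i1 : ∀ s, 0 ≤ s → Integrable (fun y => Real.exp (-(l * y))) (Qγ s x) := by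
    intro s hs
    obtain ⟨hp, hq0, hlap⟩ := hQ s x hs hx
    exact bdd_int hq0 (C := 1) (by fun_prop) (fun y hy => by
      rw [abs_of_pos (Real.exp_pos _)]; apply Real.exp_le_one_iff.2; have : 0 ≤ l * y := by positivity
      linarith)
  have i2 : ∀ s, 0 ≤ s → Integrable (fun y => y * Real.exp (-(l * y))) (Qγ s x) := by
    intro s hs
    obtain ⟨hp, hq0, hlap⟩ := hQ s x hs hx
    exact bdd_int hq0 (C := 1 / l) (by fun_prop) (fun y hy => by
      rw [abs_of_nonneg (by positivity)]; exact y_exp_le l y hl)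
  refine ⟨fun s hs => (i1 s hs).const_mul a, fun s hs => ?_, ?_, ?_, ?_⟩
  · have := (((i2 s hs).const_mul (φ l)).sub ((i1 s hs).const_mul (ψ l))).const_mul a
    refine this.congr (ae_of_all _ fun y => ?_)
    simp only [Pi.sub_apply]; ring
  · simp only [integral_const_mul]
    exact continuousOn_const.mul (lap_cont hφ hψ hv hQ x hx l hl)
  · intro s hs
    simp only [integral_const_mul]
    exact (lap_deriv hφ hψ hv hQ x hx l hl s hs).const_mul a
  · rw [integral_const_mul, lap_zero hφ hv hQ x hx l hl]

open Polynomial in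
lemma adm_poly (hε : 0 < ε) (hε1 : ε ≤ 1) (p : ℝ[X]) : ∃ B,
    Adm ε B (fun y => p.eval (Real.exp (-(ε * y))))
      (fun y => -(ε * Real.exp (-(ε * y)) * p.derivative.eval (Real.exp (-(ε * y)))))
      (fun y => ε ^ 2 * Real.exp (-(ε * y)) * p.derivative.eval (Real.exp (-(ε * y))) +
        ε ^ 2 * Real.exp (-(ε * y)) ^ 2 * p.derivative.derivative.eval (Real.exp (-(ε * y)))) := by
  obtain ⟨C1, h1⟩ := (isCompact_Icc (a := (0:ℝ)) (b := 1)).exists_bound_of_continuousOn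
    (p.derivative.continuous.continuousOn)
  obtain ⟨C2, h2⟩ := (isCompact_Icc (a := (0:ℝ)) (b := 1)).exists_bound_of_continuousOn
    (p.derivative.derivative.continuous.continuousOn)
  exact ⟨_, adm_lift (g := fun u => p.eval u) (g1 := fun u => p.derivative.eval u)
    (g2 := fun u => p.derivative.derivative.eval u) (fun u => p.hasDerivAt u)
    (fun u => p.derivative.hasDerivAt u) (B := max C1 C2)
    (fun u hu => (h1 u hu).trans (le_max_left _ _)) (fun u hu => (h2 u hu).trans (le_max_right _ _)) hε hε1⟩

open Polynomial in
lemma kol_poly (hφ : IsBranchingMechanism φ β σ m) (hψ : IsImmigrationMechanism ψ h ν)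
    (hv : IsCumulant φ v) (hQ : IsCBISemigroup v ψ Qγ) (x : ℝ) (hx : 0 ≤ x)
    (hε : 0 < ε) (hε1 : ε ≤ 1) (p : ℝ[X]) :
    Kol Qγ x (fun y => p.eval (Real.exp (-(ε * y))))
      (gen β σ h m ν (fun y => p.eval (Real.exp (-(ε * y))))
      (fun y => -(ε * Real.exp (-(ε * y)) * p.derivative.eval (Real.exp (-(ε * y)))))
      (fun y => ε ^ 2 * Real.exp (-(ε * y)) * p.derivative.eval (Real.exp (-(ε * y))) +
        ε ^ 2 * Real.exp (-(ε * y)) ^ 2 * p.derivative.derivative.eval (Real.exp (-(ε * y))))) := by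
  induction p using Polynomial.induction_on' with
  | add p q hp hq =>
    obtain ⟨B1, a1⟩ := adm_poly hε hε1 p
    obtain ⟨B2, a2⟩ := adm_poly hε hε1 q
    have := (hp.add hq).congr hQ hx (A' := gen β σ h m ν _ _ _)
      (fun y hy => gen_add a1 a2 hφ hψ y hy)
    simp only [eval_add, derivative_add]
    convert this using 3
    all_goals first | rfl | ring
  | monomial n a =>
    have hpow : ∀ y, Real.exp (-(ε * y)) ^ n = Real.exp (-((n * ε) * y)) := by
      intro y; rw [← Real.exp_nat_mul]; congr 1; ring
    rcases Nat.eq_zero_or_pos n with hn | hn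
    · subst hn
      refine Kol.congr hQ hx (P := fun y => _) (A := fun _ => 0) ?_ ?_
      · simpa using kol_const hQ x hx a
      · intro y hy
        simp [gen]
    · have hn' : (0:ℝ) < n := by exact_mod_cast hn
      have hfun : (fun y => (monomial n a).eval (Real.exp (-(ε * y)))) = fun y => a * Real.exp (-((n * ε) * y)) := by
        funext y; rw [eval_monomial, hpow]
      have kk := kol_exp hφ hψ hv hQ x hx a (n * ε) (by positivity)
      rw [← hfun] at kk
      refine kk.congr hQ hx fun y hy => ?_
      apply gen_exp hφ hψ a (n * ε) (by positivity)
      · intro y; rw [eval_monomial, hpow]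
      · obtain ⟨k, rfl⟩ : ∃ k, n = k + 1 := ⟨n - 1, by omega⟩
        rw [← hpow, derivative_monomial, eval_monomial]
        simp only [Nat.add_sub_cancel]; push_cast; ring
      · rw [← hpow, derivative_monomial, eval_monomial, derivative_monomial, eval_monomial]
        obtain ⟨k, rfl⟩ : ∃ k, n = k + 1 := ⟨n - 1, by omega⟩
        simp only [Nat.add_sub_cancel]
        rcases k with _ | k
        · simp; ring
        · simp only [Nat.add_sub_cancel]; push_cast; ring

open Polynomial in
lemma antideriv (q : ℝ[X]) (a : ℝ) : ∃ p : ℝ[X], p.derivative = q ∧ p.eval 0 = a := by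
  have : ∃ p : ℝ[X], p.derivative = q := by
    induction q using Polynomial.induction_on' with
    | add p q hp hq =>
      obtain ⟨p', rfl⟩ := hp
      obtain ⟨q', rfl⟩ := hq
      exact ⟨p' + q', by simp⟩
    | monomial n a =>
      refine ⟨monomial (n + 1) (a / (n + 1)), ?_⟩
      rw [derivative_monomial]
      simp only [Nat.add_sub_cancel]; push_cast
      rw [div_mul_cancel₀]
      positivity
  obtain ⟨p, rfl⟩ := this
  exact ⟨p + C (a - p.eval 0), by simp, by simp⟩

lemma prim_close {g g1 k k1 : ℝ → ℝ} (hg : ∀ u, HasDerivAt g (g1 u) u) (hk : ∀ u, HasDerivAt k (k1 u) u)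
    (h0 : g 0 = k 0) {η : ℝ} (hη : 0 ≤ η) (hb : ∀ u ∈ Icc (0:ℝ) 1, |g1 u - k1 u| ≤ η) :
    ∀ u ∈ Icc (0:ℝ) 1, |g u - k u| ≤ η := by
  intro u hu
  have := lift1 (g := fun u => g u - k u) (g1 := fun u => g1 u - k1 u) (fun u => (hg u).sub (hk u)) hb u 0 hu
    ⟨le_rfl, zero_le_one⟩
  simp only [h0, sub_self, sub_zero] at this
  refine this.trans ?_
  rw [abs_of_nonneg hu.1]; nlinarith [hu.2]

open Polynomial in
lemma approx (hφ : IsBranchingMechanism φ β σ m) (hψ : IsImmigrationMechanism ψ h ν)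
    (hv : IsCumulant φ v) (hQ : IsCBISemigroup v ψ Qγ) (x : ℝ) (hx : 0 ≤ x)
    (hε : 0 < ε) (hε1 : ε ≤ 1) {g g1 g2 : ℝ → ℝ} (hg : ∀ u, HasDerivAt g (g1 u) u)
    (hg1 : ∀ u, HasDerivAt g1 (g2 u) u) (hg2 : Continuous g2) :
    ∃ P A, Kol Qγ x P A ∧ (∀ y, 0 ≤ y → |P y - g (Real.exp (-(ε * y)))| ≤ 1) ∧
      ∀ y, 0 ≤ y → |A y - gen β σ h m ν (fun y => g (Real.exp (-(ε * y))))
      (fun y => -(ε * Real.exp (-(ε * y)) * g1 (Real.exp (-(ε * y)))))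
      (fun y => ε ^ 2 * Real.exp (-(ε * y)) * g1 (Real.exp (-(ε * y))) +
        ε ^ 2 * Real.exp (-(ε * y)) ^ 2 * g2 (Real.exp (-(ε * y)))) y| ≤ 1 := by
  obtain ⟨C, hC, hgen⟩ := gen_bound hφ hψ ε hε
  set η := 1 / (2 * C + 1) with hη
  have hη0 : 0 < η := by positivity
  have hη1 : η ≤ 1 := by rw [hη, div_le_one (by positivity)]; linarith
  have hηC : C * (2 * η) ≤ 1 := by
    rw [hη, show C * (2 * (1 / (2 * C + 1))) = (2 * C) / (2 * C + 1) by ring, div_le_one (by positivity)]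
    linarith
  obtain ⟨q, hq⟩ := exists_polynomial_near_of_continuousOn 0 1 g2 hg2.continuousOn η hη0
  obtain ⟨p1, hp1, hp10⟩ := antideriv q (g1 0)
  obtain ⟨p, hp, hp0⟩ := antideriv p1 (g 0)
  subst hp1; subst hp
  have c2 : ∀ u ∈ Icc (0:ℝ) 1, |p.derivative.derivative.eval u - g2 u| ≤ η := fun u hu => (hq u hu).le
  have c1 : ∀ u ∈ Icc (0:ℝ) 1, |p.derivative.eval u - g1 u| ≤ η :=
    prim_close (fun u => p.derivative.hasDerivAt u) hg1 hp10 hη0.le c2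
  have c0 : ∀ u ∈ Icc (0:ℝ) 1, |p.eval u - g u| ≤ η :=
    prim_close (fun u => p.hasDerivAt u) hg hp0 hη0.le c1
  refine ⟨_, _, kol_poly hφ hψ hv hQ x hx hε hε1 p, ?_, ?_⟩
  · intro y hy
    refine (c0 _ ⟨(Real.exp_pos _).le, ?_⟩).trans hη1
    apply Real.exp_le_one_iff.2; have : 0 ≤ ε * y := by positivity
    linarith
  · intro y hy
    obtain ⟨B, hB⟩ := adm_poly hε hε1 p
    have hR := adm_lift (ε := ε) (g := fun u => p.eval u - g u) (g1 := fun u => p.derivative.eval u - g1 u)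
      (g2 := fun u => p.derivative.derivative.eval u - g2 u) (fun u => (p.hasDerivAt u).sub (hg u))
      (fun u => (p.derivative.hasDerivAt u).sub (hg1 u)) c1 c2 hε hε1
    obtain ⟨C1, h1⟩ := (isCompact_Icc (a := (0:ℝ)) (b := 1)).exists_bound_of_continuousOn
      (f := g1) (continuous_iff_continuousAt.2 fun u => (hg1 u).continuousAt).continuousOn
    obtain ⟨C2, h2⟩ := (isCompact_Icc (a := (0:ℝ)) (b := 1)).exists_bound_of_continuousOn
      (f := g2) hg2.continuousOn
    have hG := adm_lift (ε := ε) hg hg1 (B := max C1 C2)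
      (fun u hu => (h1 u hu).trans (le_max_left _ _)) (fun u hu => (h2 u hu).trans (le_max_right _ _)) hε hε1
    have hadd := gen_add hG hR hφ hψ y hy
    have hb := hgen _ _ _ _ (by positivity) hR y hy
    have e0 : (fun y => g (Real.exp (-(ε * y))) + (p.eval (Real.exp (-(ε * y))) - g (Real.exp (-(ε * y))))) =
      fun y => p.eval (Real.exp (-(ε * y))) := by funext y; ring
    rw [e0] at hadd
    have e1 : (fun y => -(ε * Real.exp (-(ε * y)) * g1 (Real.exp (-(ε * y)))) +
      -(ε * Real.exp (-(ε * y)) * (p.derivative.eval (Real.exp (-(ε * y))) - g1 (Real.exp (-(ε * y)))))) =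
      fun y => -(ε * Real.exp (-(ε * y)) * p.derivative.eval (Real.exp (-(ε * y)))) := by funext y; ring
    rw [e1] at hadd
    have e2 : (fun y => ε ^ 2 * Real.exp (-(ε * y)) * g1 (Real.exp (-(ε * y))) +
        ε ^ 2 * Real.exp (-(ε * y)) ^ 2 * g2 (Real.exp (-(ε * y))) +
        (ε ^ 2 * Real.exp (-(ε * y)) * (p.derivative.eval (Real.exp (-(ε * y))) - g1 (Real.exp (-(ε * y)))) +
        ε ^ 2 * Real.exp (-(ε * y)) ^ 2 * (p.derivative.derivative.eval (Real.exp (-(ε * y))) - g2 (Real.exp (-(ε * y)))))) =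
      fun y => ε ^ 2 * Real.exp (-(ε * y)) * p.derivative.eval (Real.exp (-(ε * y))) +
        ε ^ 2 * Real.exp (-(ε * y)) ^ 2 * p.derivative.derivative.eval (Real.exp (-(ε * y))) := by funext y; ring
    rw [e2] at hadd
    rw [hadd, add_sub_cancel_left]
    exact hb.trans hηC
end

section
variable {G G1 G2 : ℝ → ℝ} {D : ℝ}

lemma GoodG.mono (hG : GoodG G G1 G2 D) : Monotone G :=
  monotone_of_deriv_nonneg (fun x => (hG.d1 x).differentiableAt) fun x => by
    rw [(hG.d1 x).deriv]; exact hG.G1nn x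

lemma GoodG.mono1 (hG : GoodG G G1 G2 D) : Monotone G1 :=
  monotone_of_deriv_nonneg (fun x => (hG.d2 x).differentiableAt) fun x => by
    rw [(hG.d2 x).deriv]; exact hG.G2nn x

lemma GoodG.cont (hG : GoodG G G1 G2 D) : Continuous G :=
  continuous_iff_continuousAt.2 fun u => (hG.d1 u).continuousAt

lemma GoodG.conv (hG : GoodG G G1 G2 D) : ConvexOn ℝ univ G := by
  apply Monotone.convexOn_univ_of_deriv (fun x => (hG.d1 x).differentiableAt)
  have : deriv G = G1 := funext fun x => (hG.d1 x).deriv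
  rw [this]; exact hG.mono1

lemma GoodG.conv' (hG : GoodG G G1 G2 D) (a c e : ℝ) (he : 0 ≤ e) (he1 : e ≤ 1) :
    G (a + e * c) - G a ≤ e * (G (a + c) - G a) := by
  have := hG.conv.2 (mem_univ a) (mem_univ (a + c)) (by linarith : 0 ≤ 1 - e) he (by ring)
  simp only [smul_eq_mul] at this
  rw [show (1 - e) * a + e * (a + c) = a + e * c by ring] at this
  linarith

lemma GoodG.near (hG : GoodG G G1 G2 D) (a x : ℝ) (ha : 0 ≤ a) (hx : x ≤ a + 1) : G x ≤ D * G a :=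
  (hG.mono (by linarith)).trans (hG.dbl a ha)

lemma GoodG.first (hG : GoodG G G1 G2 D) (a b : ℝ) (ha : 0 ≤ a) (hb : 0 ≤ b) (hb1 : b ≤ 1) :
    G (a + b) - G a ≤ D ^ 2 * G a * b := by
  have hD := hG.one_le
  have h := Convex.norm_image_sub_le_of_norm_hasDerivWithin_le (f := G) (f' := G1) (C := D ^ 2 * G a)
    (s := Icc a (a + b)) (fun x _ => (hG.d1 x).hasDerivWithinAt) (fun x hx => by
      have hx0 : 0 ≤ x := ha.trans hx.1
      rw [Real.norm_eq_abs, abs_of_nonneg (hG.G1nn x)]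
      have h1 := hG.G1le x hx0
      have h2 := hG.near a x ha (by linarith [hx.2])
      have h3 := hG.G1nn x
      nlinarith) (convex_Icc _ _)
    (left_mem_Icc.2 (by linarith)) (right_mem_Icc.2 (by linarith))
  rw [Real.norm_eq_abs, Real.norm_eq_abs, add_sub_cancel_left, abs_of_nonneg hb] at h
  exact (le_abs_self _).trans h

lemma GoodG.taylor (hG : GoodG G G1 G2 D) (a b : ℝ) (ha : 0 ≤ a) (hb : 0 ≤ b) (hb1 : b ≤ 1) :
    (1 + a) * |G (a + b) - G a - b * G1 a| ≤ D ^ 2 * G a * b ^ 2 := by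
  have hD := hG.one_le
  have hGa := hG.ge1 a ha
  set M := D ^ 2 * G a / (1 + a) with hM
  have hM0 : 0 ≤ M := by positivity
  have h2 : ∀ x ∈ Icc a (a + b), ‖G2 x‖ ≤ M := by
    intro x hx
    have hx0 : 0 ≤ x := ha.trans hx.1
    rw [Real.norm_eq_abs, abs_of_nonneg (hG.G2nn x), hM, le_div_iff₀ (by positivity)]
    have h1 := hG.G2le x hx0
    have h2 := hG.near a x ha (by linarith [hx.2])
    have h3 := hG.G2nn x
    have h4 : G2 x * (1 + a) ≤ (1 + x) * G2 x := by nlinarith [hx.1]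
    nlinarith
  have hmem : a ∈ Icc a (a + b) := left_mem_Icc.2 (by linarith)
  have h1 : ∀ x ∈ Icc a (a + b), ‖G1 x - G1 a‖ ≤ M * b := by
    intro x hx
    have := Convex.norm_image_sub_le_of_norm_hasDerivWithin_le (f := G1) (f' := G2) (C := M)
      (s := Icc a (a + b)) (fun x _ => (hG.d2 x).hasDerivWithinAt) h2 (convex_Icc _ _) hmem hx
    refine this.trans (mul_le_mul_of_nonneg_left ?_ hM0)
    rw [Real.norm_eq_abs, abs_of_nonneg (by linarith [hx.1])]; linarith [hx.2]
  have h0 := Convex.norm_image_sub_le_of_norm_hasDerivWithin_le (f := fun u => G u - G1 a * u)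
    (f' := fun u => G1 u - G1 a) (C := M * b) (s := Icc a (a + b))
    (fun x _ => by
      have := (hG.d1 x).sub ((hasDerivAt_id' x).const_mul (G1 a))
      rw [mul_one] at this
      exact this.hasDerivWithinAt) h1 (convex_Icc _ _) hmem (right_mem_Icc.2 (by linarith))
  simp only [Real.norm_eq_abs, add_sub_cancel_left, abs_of_nonneg hb] at h0
  rw [show G (a + b) - G a - b * G1 a = G (a + b) - G1 a * (a + b) - (G a - G1 a * a) by ring]
  have h5 : (1 + a) * M = D ^ 2 * G a := by rw [hM]; field_simp
  calc _ ≤ (1 + a) * (M * b * b) := mul_le_mul_of_nonneg_left h0 (by positivity)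
    _ = (1 + a) * M * b ^ 2 := by ring
    _ = _ := by rw [h5]

lemma GoodG.bigm (hG : GoodG G G1 G2 D) (a z : ℝ) (ha : 0 ≤ a) (hz : 0 ≤ z) :
    a * (G (a + z) - G a) ≤ D ^ 3 * G a * G z := by
  have hD := hG.one_le
  have hGa := hG.ge1 a ha
  have hGz := hG.ge1 z hz
  rcases le_total z a with h | h
  · have h1 : G (a + z) - G a ≤ G1 (2 * a) * z := by
      have := Convex.norm_image_sub_le_of_norm_hasDerivWithin_le (f := G) (f' := G1) (C := G1 (2 * a))
        (s := Icc a (a + z)) (fun x _ => (hG.d1 x).hasDerivWithinAt) (fun x hx => by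
          rw [Real.norm_eq_abs, abs_of_nonneg (hG.G1nn x)]
          exact hG.mono1 (by linarith [hx.2])) (convex_Icc _ _)
        (left_mem_Icc.2 (by linarith)) (right_mem_Icc.2 (by linarith))
      rw [Real.norm_eq_abs, Real.norm_eq_abs, add_sub_cancel_left, abs_of_nonneg hz] at this
      exact (le_abs_self _).trans this
    have h2 : a * G1 (2 * a) ≤ D * G (2 * a) := by
      have := hG.G1le (2 * a) (by linarith)
      have := hG.G1nn (2 * a)
      nlinarith
    have h3 : G (2 * a) ≤ D * G a := (hG.mono (by linarith)).trans (hG.dbl a ha)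
    have h4 := hG.lin z hz
    calc a * (G (a + z) - G a) ≤ a * (G1 (2 * a) * z) := mul_le_mul_of_nonneg_left h1 ha
      _ = (a * G1 (2 * a)) * z := by ring
      _ ≤ (D * (D * G a)) * (D * G z) := by
        apply mul_le_mul (h2.trans (by gcongr)) h4 hz (by positivity)
      _ = _ := by ring
  · have h1 : G (a + z) ≤ D * G z := (hG.mono (by linarith)).trans (hG.dbl z hz)
    have h4 := hG.lin a ha
    calc a * (G (a + z) - G a) ≤ (D * G a) * (D * G z) :=
          mul_le_mul h4 (by linarith) (by linarith [hG.mono (by linarith : a ≤ a + z)]) (by positivity)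
      _ = D ^ 2 * G a * G z := by ring
      _ ≤ _ := by gcongr <;> first | exact hD | norm_num

lemma GoodG.bign (hG : GoodG G G1 G2 D) (a z : ℝ) (ha : 0 ≤ a) (hz : 0 ≤ z) :
    G (a + z) - G a ≤ D ^ 3 * G a * G z := by
  have hD := hG.one_le
  have hGa := hG.ge1 a ha
  have hGz := hG.ge1 z hz
  have hD3 : D ≤ D ^ 3 := le_self_pow₀ hD (by norm_num)
  have : G (a + z) ≤ D * (G a * G z) := by
    rcases le_total z a with h | h
    · have h1 : G (a + z) ≤ D * G a := (hG.mono (by linarith)).trans (hG.dbl a ha)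
      refine h1.trans (mul_le_mul_of_nonneg_left ?_ (by linarith)); nlinarith
    · have h1 : G (a + z) ≤ D * G z := (hG.mono (by linarith)).trans (hG.dbl z hz)
      refine h1.trans (mul_le_mul_of_nonneg_left ?_ (by linarith)); nlinarith
  have h2 : D * (G a * G z) ≤ D ^ 3 * (G a * G z) := mul_le_mul_of_nonneg_right hD3 (by positivity)
  linarith

/-- The truncation map. -/
def TT (ε y : ℝ) : ℝ := (1 - Real.exp (-(ε * y))) / ε

variable {ε : ℝ}

lemma TT_cont : Continuous (TT ε) := by unfold TT; fun_prop

lemma TT_nn (hε : 0 < ε) (y : ℝ) (hy : 0 ≤ y) : 0 ≤ TT ε y := by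
  unfold TT
  have h0 : 0 ≤ ε * y := by positivity
  have : Real.exp (-(ε * y)) ≤ 1 := Real.exp_le_one_iff.2 (by linarith)
  apply div_nonneg _ hε.le; linarith

lemma TT_le (hε : 0 < ε) (y : ℝ) : TT ε y ≤ y := by
  unfold TT
  rw [div_le_iff₀ hε]
  linarith [Real.add_one_le_exp (-(ε * y))]

lemma TT_ge (hε : 0 < ε) (y : ℝ) : y * Real.exp (-(ε * y)) ≤ TT ε y := by
  unfold TT
  rw [le_div_iff₀ hε]
  have h1 := Real.add_one_le_exp (ε * y)
  have h2 := Real.exp_pos (-(ε * y))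
  have h3 : Real.exp (-(ε * y)) * Real.exp (ε * y) = 1 := by rw [← Real.exp_add]; simp
  nlinarith

lemma TT_add (y z : ℝ) : TT ε (y + z) = TT ε y + Real.exp (-(ε * y)) * TT ε z := by
  unfold TT
  rw [mul_add, neg_add, Real.exp_add]; ring

lemma TT_quad (hε : 0 < ε) (hε1 : ε ≤ 1) (z : ℝ) (hz : 0 ≤ z) : z - TT ε z ≤ z ^ 2 := by
  have h := exp_neg_le_quad (ε * z) (by positivity)
  have : z - z ^ 2 ≤ TT ε z := by
    unfold TT
    rw [le_div_iff₀ hε]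
    nlinarith [mul_nonneg hε.le (sq_nonneg z)]
  linarith

lemma TT_mono (hε : 0 < ε) : Monotone (TT ε) := by
  intro a b hab
  unfold TT
  apply div_le_div_of_nonneg_right _ hε.le
  have : Real.exp (-(ε * b)) ≤ Real.exp (-(ε * a)) := Real.exp_le_exp.2 (by nlinarith)
  linarith

/-- Derivative of the truncated function. -/
def FT1 (G1 : ℝ → ℝ) (ε y : ℝ) : ℝ := Real.exp (-(ε * y)) * G1 (TT ε y)

/-- Second derivative of the truncated function. -/
def FT2 (G1 G2 : ℝ → ℝ) (ε y : ℝ) : ℝ :=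
  Real.exp (-(ε * y)) ^ 2 * G2 (TT ε y) - ε * Real.exp (-(ε * y)) * G1 (TT ε y)

lemma E_mem (hε : 0 < ε) (y : ℝ) (hy : 0 ≤ y) : 0 < Real.exp (-(ε * y)) ∧ Real.exp (-(ε * y)) ≤ 1 :=
  ⟨Real.exp_pos _, Real.exp_le_one_iff.2 (by have : 0 ≤ ε * y := by positivity
                                             linarith)⟩

lemma ft_b1 (hG : GoodG G G1 G2 D) (hε : 0 < ε) (y : ℝ) (hy : 0 ≤ y) :
    0 ≤ FT1 G1 ε y ∧ FT1 G1 ε y ≤ D * G (TT ε y) ∧ y * FT1 G1 ε y ≤ D * G (TT ε y) := by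
  have hE := E_mem hε y hy
  have hT := TT_nn hε y hy
  have h1 := hG.G1le _ hT
  have h2 := hG.G1nn (TT ε y)
  have h3 := TT_ge hε y
  unfold FT1
  refine ⟨mul_nonneg hE.1.le h2, by nlinarith, ?_⟩
  have : (y * Real.exp (-(ε * y))) * G1 (TT ε y) ≤ TT ε y * G1 (TT ε y) := mul_le_mul_of_nonneg_right h3 h2
  linarith

lemma ft_b2 (hG : GoodG G G1 G2 D) (hε : 0 < ε) (hε1 : ε ≤ 1) (y : ℝ) (hy : 0 ≤ y) :
    |y * FT2 G1 G2 ε y| ≤ D * G (TT ε y) := by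
  have hE := E_mem hε y hy
  have hT := TT_nn hε y hy
  have h1 := hG.G1le _ hT
  have h1' := hG.G2le _ hT
  have h2 := hG.G1nn (TT ε y)
  have h2' := hG.G2nn (TT ε y)
  have h3 := TT_ge hε y
  unfold FT2
  set E := Real.exp (-(ε * y))
  set T := TT ε y
  have hyE : 0 ≤ y * E := mul_nonneg hy hE.1.le
  have a1 : (y * E) * G1 T ≤ T * G1 T := mul_le_mul_of_nonneg_right h3 h2
  have a2 : (y * E) * G2 T ≤ T * G2 T := mul_le_mul_of_nonneg_right h3 h2'
  have c1 : 0 ≤ (y * E) * G1 T := mul_nonneg hyE h2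
  have c2 : 0 ≤ (y * E) * G2 T := mul_nonneg hyE h2'
  have b1 : ε * ((y * E) * G1 T) ≤ (y * E) * G1 T := by nlinarith
  have b2 : E * ((y * E) * G2 T) ≤ (y * E) * G2 T := by nlinarith
  have b1' : 0 ≤ ε * ((y * E) * G1 T) := mul_nonneg hε.le c1
  have b2' : 0 ≤ E * ((y * E) * G2 T) := mul_nonneg hE.1.le c2
  rw [show y * (E ^ 2 * G2 T - ε * E * G1 T) = E * ((y * E) * G2 T) - ε * ((y * E) * G1 T) by ring]
  rw [abs_le]; constructor <;> linarith

lemma ft_inc_nn (hG : GoodG G G1 G2 D) (hε : 0 < ε) (y z : ℝ) (hz : 0 ≤ z) :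
    0 ≤ G (TT ε (y + z)) - G (TT ε y) :=
  sub_nonneg.2 (hG.mono (TT_mono hε (by linarith)))

lemma ft_sm (hG : GoodG G G1 G2 D) (hε : 0 < ε) (hε1 : ε ≤ 1) (y z : ℝ) (hy : 0 ≤ y) (hz : 0 ≤ z)
    (hz1 : z ≤ 1) :
    |y * (G (TT ε (y + z)) - G (TT ε y) - z * FT1 G1 ε y)| ≤ D ^ 3 * G (TT ε y) * (2 * z ^ 2) := by
  have hE := E_mem hε y hy
  have hT := TT_nn hε y hy
  have hD := hG.one_le
  have hGT := hG.ge1 _ hT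
  have h1 := hG.G1le _ hT
  have h2 := hG.G1nn (TT ε y)
  have h3 := TT_ge hε y
  have hTz := TT_nn hε z hz
  have hTz1 := TT_le hε z
  have hq := TT_quad hε hε1 z hz
  rw [TT_add]
  unfold FT1
  set E := Real.exp (-(ε * y))
  set T := TT ε y
  set c := TT ε z
  have hb0 : 0 ≤ E * c := mul_nonneg hE.1.le hTz
  have hbz : E * c ≤ E * z := mul_le_mul_of_nonneg_left hTz1 hE.1.le
  have hb1 : E * c ≤ 1 := by nlinarith
  have ht := hG.taylor T (E * c) hT hb0 hb1
  have hyE : 0 ≤ y * E := mul_nonneg hy hE.1.le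
  have key : y * (G (T + E * c) - G T - z * (E * G1 T)) =
      y * (G (T + E * c) - G T - E * c * G1 T) - (y * E) * G1 T * (z - c) := by ring
  have hzc : 0 ≤ z - c := by linarith
  have s2 : |(y * E) * G1 T * (z - c)| ≤ D * G T * z ^ 2 := by
    rw [abs_of_nonneg (mul_nonneg (mul_nonneg hyE h2) hzc)]
    apply mul_le_mul _ hq hzc (by positivity)
    have : (y * E) * G1 T ≤ T * G1 T := mul_le_mul_of_nonneg_right h3 h2
    linarith
  have s1 : |y * (G (T + E * c) - G T - E * c * G1 T)| ≤ D ^ 2 * G T * z ^ 2 := by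
    rw [abs_mul, abs_of_nonneg hy]
    set X := |G (T + E * c) - G T - E * c * G1 T|
    have hX : 0 ≤ X := abs_nonneg _
    rcases hy.eq_or_lt with h0 | h0
    · rw [← h0, zero_mul]; positivity
    have e1 : (1 + T) * X ≤ D ^ 2 * G T * (E ^ 2 * z ^ 2) := by
      refine ht.trans ?_
      have : (E * c) ^ 2 ≤ E ^ 2 * z ^ 2 := by rw [← mul_pow]; exact pow_le_pow_left₀ hb0 hbz 2
      exact mul_le_mul_of_nonneg_left this (by positivity)
    have e2 : E * (y * X) ≤ (1 + T) * X := by nlinarith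
    have e3 : E * (y * X) ≤ E * (D ^ 2 * G T * z ^ 2) := by
      refine (e2.trans e1).trans ?_
      have : E ^ 2 ≤ E := by nlinarith
      have : D ^ 2 * G T * z ^ 2 * E ^ 2 ≤ D ^ 2 * G T * z ^ 2 * E :=
        mul_le_mul_of_nonneg_left this (by positivity)
      linarith
    exact le_of_mul_le_mul_left e3 hE.1
  rw [key]
  refine (abs_sub _ _).trans ?_
  have d1 : D ≤ D ^ 3 := le_self_pow₀ hD (by norm_num)
  have d2 : D ^ 2 ≤ D ^ 3 := pow_le_pow_right₀ hD (by norm_num)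
  have w : 0 ≤ G T * z ^ 2 := by positivity
  nlinarith [mul_le_mul_of_nonneg_right d1 w, mul_le_mul_of_nonneg_right d2 w]

lemma ft_sn (hG : GoodG G G1 G2 D) (hε : 0 < ε) (y z : ℝ) (hy : 0 ≤ y) (hz : 0 ≤ z)
    (hz1 : z ≤ 1) : G (TT ε (y + z)) - G (TT ε y) ≤ D ^ 3 * G (TT ε y) * z := by
  have hE := E_mem hε y hy
  have hT := TT_nn hε y hy
  have hD := hG.one_le
  have hGT := hG.ge1 _ hT
  have hTz := TT_nn hε z hz
  have hTz1 := TT_le hε z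
  rw [TT_add]
  have hb0 : 0 ≤ Real.exp (-(ε * y)) * TT ε z := mul_nonneg hE.1.le hTz
  have hbz : Real.exp (-(ε * y)) * TT ε z ≤ z := by nlinarith
  refine (hG.first _ _ hT hb0 (hbz.trans hz1)).trans ?_
  have d2 : D ^ 2 ≤ D ^ 3 := pow_le_pow_right₀ hD (by norm_num)
  gcongr

lemma ft_bm (hG : GoodG G G1 G2 D) (hε : 0 < ε) (y z : ℝ) (hy : 0 ≤ y) (hz : 0 ≤ z) :
    y * (G (TT ε (y + z)) - G (TT ε y)) ≤ D ^ 3 * G (TT ε y) * G z := by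
  have hE := E_mem hε y hy
  have hT := TT_nn hε y hy
  have h3 := TT_ge hε y
  have hTz1 := TT_le hε z
  have h1 := hG.conv' (TT ε y) (TT ε z) _ hE.1.le hE.2
  rw [TT_add]
  have h4 := hG.mono (by linarith : TT ε y + TT ε z ≤ TT ε y + z)
  have h5 := hG.mono (by linarith [TT_nn hε z hz] : TT ε y ≤ TT ε y + TT ε z)
  calc _ ≤ y * (Real.exp (-(ε * y)) * (G (TT ε y + TT ε z) - G (TT ε y))) := mul_le_mul_of_nonneg_left h1 hy
    _ = (y * Real.exp (-(ε * y))) * (G (TT ε y + TT ε z) - G (TT ε y)) := by ring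
    _ ≤ TT ε y * (G (TT ε y + z) - G (TT ε y)) := by
      apply mul_le_mul h3 (by linarith) (by linarith) hT
    _ ≤ _ := hG.bigm _ _ hT hz

lemma ft_bn (hG : GoodG G G1 G2 D) (hε : 0 < ε) (y z : ℝ) (hy : 0 ≤ y) (hz : 0 ≤ z) :
    G (TT ε (y + z)) - G (TT ε y) ≤ D ^ 3 * G (TT ε y) * G z := by
  have hE := E_mem hε y hy
  have hT := TT_nn hε y hy
  have hTz1 := TT_le hε z
  have hTz := TT_nn hε z hz
  rw [TT_add]
  have h4 := hG.mono (by nlinarith : TT ε y + Real.exp (-(ε * y)) * TT ε z ≤ TT ε y + z)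
  linarith [hG.bign _ z hT hz]

/-- The localising function. -/
def kap (b y : ℝ) : ℝ := (1 - Real.exp (-y)) * (Real.exp (-y) - Real.exp (-b))

lemma kap_low (hG : GoodG G G1 G2 D) (hε : 0 < ε) (b y z : ℝ) (hb : 0 ≤ b) (hy : 0 ≤ y) (hz : 0 ≤ z) :
    kap b y * max (G (TT ε z) - G b) 0 ≤ y * (G (TT ε (y + z)) - G (TT ε y)) ∧
    kap b y * max (G (TT ε z) - G b) 0 ≤ G (TT ε (y + z)) - G (TT ε y) := by
  have h0 := ft_inc_nn hG hε y z hz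
  have hM : 0 ≤ max (G (TT ε z) - G b) 0 := le_max_right _ _
  have hey : Real.exp (-y) ≤ 1 := Real.exp_le_one_iff.2 (by linarith)
  have hey' := Real.exp_pos (-y)
  have heb := Real.exp_pos (-b)
  have hly := Real.add_one_le_exp (-y)
  unfold kap
  rcases le_total y b with h | h
  · have h1 : max (G (TT ε z) - G b) 0 ≤ G (TT ε (y + z)) - G (TT ε y) := by
      apply max_le _ h0
      have a1 := hG.mono (TT_mono hε (by linarith : z ≤ y + z))
      have a2 := hG.mono ((TT_le hε y).trans h)
      linarith
    have hbe : Real.exp (-b) ≤ Real.exp (-y) := Real.exp_le_exp.2 (by linarith)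
    have k0 : 0 ≤ (1 - Real.exp (-y)) * (Real.exp (-y) - Real.exp (-b)) :=
      mul_nonneg (by linarith) (by linarith)
    have k1 : (1 - Real.exp (-y)) * (Real.exp (-y) - Real.exp (-b)) ≤ 1 - Real.exp (-y) := by
      nlinarith
    exact ⟨mul_le_mul (by linarith) h1 hM hy, by nlinarith⟩
  · have hbe : Real.exp (-y) ≤ Real.exp (-b) := Real.exp_le_exp.2 (by linarith)
    have k0 : (1 - Real.exp (-y)) * (Real.exp (-y) - Real.exp (-b)) ≤ 0 :=
      mul_nonpos_of_nonneg_of_nonpos (by linarith) (by linarith)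
    have := mul_nonpos_of_nonpos_of_nonneg k0 hM
    exact ⟨this.trans (mul_nonneg hy h0), this.trans h0⟩
end

section
variable {φ : ℝ → ℝ} {β σ : ℝ} {m : Measure ℝ} {ψ : ℝ → ℝ} {h : ℝ} {ν : Measure ℝ}
  {v : ℝ → ℝ → ℝ} {Qγ : ℝ → ℝ → Measure ℝ} {ε : ℝ} {G G1 G2 : ℝ → ℝ} {D : ℝ}

lemma liftG (hG : GoodG G G1 G2 D) (hε : 0 < ε) :
    (∀ u, HasDerivAt (fun u => G ((1 - u) / ε)) (-(G1 ((1 - u) / ε) / ε)) u) ∧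
    (∀ u, HasDerivAt (fun u => -(G1 ((1 - u) / ε) / ε)) (G2 ((1 - u) / ε) / ε ^ 2) u) ∧
    Continuous (fun u => G2 ((1 - u) / ε) / ε ^ 2) ∧
    (fun y => G ((1 - Real.exp (-(ε * y))) / ε)) = (fun y => G (TT ε y)) ∧
    (fun y => -(ε * Real.exp (-(ε * y)) * -(G1 ((1 - Real.exp (-(ε * y))) / ε) / ε))) = FT1 G1 ε ∧
    (fun y => ε ^ 2 * Real.exp (-(ε * y)) * -(G1 ((1 - Real.exp (-(ε * y))) / ε) / ε) +
        ε ^ 2 * Real.exp (-(ε * y)) ^ 2 * (G2 ((1 - Real.exp (-(ε * y))) / ε) / ε ^ 2)) = FT2 G1 G2 ε := by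
  have hin : ∀ u, HasDerivAt (fun u : ℝ => (1 - u) / ε) (-1 / ε) u := fun u =>
    ((hasDerivAt_id' u).const_sub 1).div_const ε
  refine ⟨?_, ?_, ?_, rfl, ?_, ?_⟩
  · intro u
    exact (HasDerivAt.comp u (h₂ := G) (hG.d1 _) (hin u)).congr_deriv (by ring)
  · intro u
    have := ((HasDerivAt.comp u (h₂ := G1) (hG.d2 _) (hin u)).div_const ε).neg
    exact this.congr_deriv (by field_simp)
  · have := hG.c2
    fun_prop
  · funext y; unfold FT1 TT; field_simp
  · funext y; unfold FT2 TT; field_simp; ring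

lemma admG (hG : GoodG G G1 G2 D) (hε : 0 < ε) (hε1 : ε ≤ 1) :
    ∃ B, Adm ε B (fun y => G (TT ε y)) (FT1 G1 ε) (FT2 G1 G2 ε) := by
  obtain ⟨a1, a2, a3, e0, e1, e2⟩ := liftG hG hε
  obtain ⟨C1, h1⟩ := (isCompact_Icc (a := (0:ℝ)) (b := 1)).exists_bound_of_continuousOn
      (continuous_iff_continuousAt.2 fun u => (a2 u).continuousAt).continuousOn
  obtain ⟨C2, h2⟩ := (isCompact_Icc (a := (0:ℝ)) (b := 1)).exists_bound_of_continuousOn a3.continuousOn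
  have hA := adm_lift (ε := ε) a1 a2 (B := max C1 C2)
      (fun u hu => (h1 u hu).trans (le_max_left _ _)) (fun u hu => (h2 u hu).trans (le_max_right _ _)) hε hε1
  rw [e1, e2] at hA
  exact ⟨_, hA⟩

lemma approxG (hφ : IsBranchingMechanism φ β σ m) (hψ : IsImmigrationMechanism ψ h ν)
    (hv : IsCumulant φ v) (hQ : IsCBISemigroup v ψ Qγ) (x : ℝ) (hx : 0 ≤ x)
    (hG : GoodG G G1 G2 D) (hε : 0 < ε) (hε1 : ε ≤ 1) :
    ∃ P A, Kol Qγ x P A ∧ (∀ y, 0 ≤ y → |P y - G (TT ε y)| ≤ 1) ∧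
      ∀ y, 0 ≤ y → |A y - gen β σ h m ν (fun y => G (TT ε y)) (FT1 G1 ε) (FT2 G1 G2 ε) y| ≤ 1 := by
  obtain ⟨a1, a2, a3, e0, e1, e2⟩ := liftG hG hε
  obtain ⟨P, A, k, k1, k2⟩ := approx hφ hψ hv hQ x hx hε hε1 a1 a2 a3
  refine ⟨P, A, k, k1, ?_⟩
  rw [e1, e2] at k2
  exact k2

lemma gen_main (hφ : IsBranchingMechanism φ β σ m)
    (hG : GoodG G G1 G2 D) (hε : 0 < ε) (hε1 : ε ≤ 1) (y : ℝ) (hy : 0 ≤ y) (hh : 0 ≤ h) :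
    |y * (-β * FT1 G1 ε y + σ ^ 2 / 2 * FT2 G1 G2 ε y)| ≤ (|β| + σ ^ 2) * D * G (TT ε y) ∧
    0 ≤ h * FT1 G1 ε y ∧ h * FT1 G1 ε y ≤ h * D * G (TT ε y) := by
  obtain ⟨b0, b1, b2⟩ := ft_b1 hG hε y hy
  have b3 := ft_b2 hG hε hε1 y hy
  refine ⟨?_, mul_nonneg hh b0, by nlinarith⟩
  rw [show y * (-β * FT1 G1 ε y + σ ^ 2 / 2 * FT2 G1 G2 ε y) =
    -β * (y * FT1 G1 ε y) + σ ^ 2 / 2 * (y * FT2 G1 G2 ε y) by ring]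
  have hDG : 0 ≤ D * G (TT ε y) := b0.trans b1
  refine (abs_add_le _ _).trans ?_
  rw [abs_mul (-β), abs_mul (σ ^ 2 / 2), abs_neg, abs_of_nonneg (mul_nonneg hy b0), abs_of_nonneg (by positivity : 0 ≤ σ ^ 2 / 2)]
  have c1 := mul_le_mul_of_nonneg_left b2 (abs_nonneg β)
  have c2 := mul_le_mul_of_nonneg_left b3 (by positivity : 0 ≤ σ ^ 2 / 2)
  nlinarith [mul_nonneg (sq_nonneg σ) hDG]

lemma gen_upper (hφ : IsBranchingMechanism φ β σ m) (hψ : IsImmigrationMechanism ψ h ν)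
    (hG : GoodG G G1 G2 D)
    (him : Integrable (fun z => if 1 < z then G z else 0) m)
    (hin : Integrable (fun z => if 1 < z then G z else 0) ν) :
    ∃ C, 0 ≤ C ∧ ∀ ε, 0 < ε → ε ≤ 1 → ∀ y, 0 ≤ y →
      gen β σ h m ν (fun y => G (TT ε y)) (FT1 G1 ε) (FT2 G1 G2 ε) y ≤ C * G (TT ε y) := by
  set Nm := ∫ z, (2 * min 1 (z ^ 2) + if 1 < z then G z else 0) ∂m with hNm
  set Nn := ∫ z, (min 1 z + if 1 < z then G z else 0) ∂ν with hNn
  have hD := hG.one_le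
  have hh := hψ.h_nonneg
  have hm0 : 0 ≤ Nm := integral_nonneg fun z => by
    have : 0 ≤ if 1 < z then G z else 0 := by
      split_ifs with h1
      · linarith [hG.ge1 z (by linarith)]
      · exact le_rfl
    positivity
  have hn0 : 0 ≤ Nn := integral_nonneg_of_ae <| by
    filter_upwards [im_ae_pos hψ] with z hz
    have : 0 ≤ if 1 < z then G z else 0 := by
      split_ifs with h1
      · linarith [hG.ge1 z (by linarith)]
      · exact le_rfl
    simp only [Pi.zero_apply]; positivity
  refine ⟨(|β| + σ ^ 2) * D + D ^ 3 * Nm + h * D + D ^ 3 * Nn, by positivity, ?_⟩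
  intro ε hε hε1 y hy
  obtain ⟨B, hA⟩ := admG hG hε hε1
  have hGT := hG.ge1 _ (TT_nn hε y hy)
  obtain ⟨g1, g2, g3⟩ := gen_main (h := h) hφ hG hε hε1 y hy hh
  unfold gen
  have i1 : y * ∫ z, (G (TT ε (y + z)) - G (TT ε y) - (if z ≤ 1 then z * FT1 G1 ε y else 0)) ∂m ≤
      D ^ 3 * G (TT ε y) * Nm := by
    rw [← integral_const_mul, hNm, ← integral_const_mul]
    apply integral_mono_ae ((hA.intm hφ y hy).const_mul y)
      ((((bm_int hφ).const_mul 2).add him).const_mul _)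
    filter_upwards [bm_ae_pos hφ] with z hz
    simp only [Pi.add_apply]
    by_cases h1 : z ≤ 1
    · rw [if_pos h1, if_neg (not_lt.2 h1), add_zero, min_eq_right (by nlinarith)]
      exact (le_abs_self _).trans (ft_sm hG hε hε1 y z hy hz.le h1)
    · rw [if_neg h1, if_pos (not_le.1 h1), sub_zero]
      refine (ft_bm hG hε y z hy hz.le).trans ?_
      apply mul_le_mul_of_nonneg_left _ (by positivity)
      have : 0 ≤ min 1 (z ^ 2) := by positivity
      linarith
  have i2 : ∫ z, (G (TT ε (y + z)) - G (TT ε y)) ∂ν ≤ D ^ 3 * G (TT ε y) * Nn := by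
    rw [hNn, ← integral_const_mul]
    apply integral_mono_ae (hA.intn hψ y hy) (((im_int hψ).add hin).const_mul _)
    filter_upwards [im_ae_pos hψ] with z hz
    simp only [Pi.add_apply]
    by_cases h1 : z ≤ 1
    · rw [if_neg (not_lt.2 h1), add_zero, min_eq_right h1]
      exact ft_sn hG hε y z hy hz.le h1
    · rw [if_pos (not_le.1 h1)]
      refine (ft_bn hG hε y z hy hz.le).trans ?_
      apply mul_le_mul_of_nonneg_left _ (by positivity)
      have : 0 ≤ min 1 z := by positivity
      linarith
  have := le_abs_self (y * (-β * FT1 G1 ε y + σ ^ 2 / 2 * FT2 G1 G2 ε y))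
  rw [mul_add y]
  linarith

lemma kint_bound (hG : GoodG G G1 G2 D) (hε : 0 < ε) (b z : ℝ) (hb : 0 ≤ b) (hz : 1 < z) :
    max (G (TT ε z) - G b) 0 ≤ G (1 / ε) := by
  have h1 : TT ε z ≤ 1 / ε := by
    unfold TT
    apply div_le_div_of_nonneg_right _ hε.le
    linarith [Real.exp_pos (-(ε * z))]
  have h2 := hG.mono h1
  have h3 := hG.ge1 b hb
  have h4 := hG.ge1 (1 / ε) (by positivity)
  apply max_le <;> linarith

lemma kint_meas (hG : GoodG G G1 G2 D) (b : ℝ) :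
    Measurable (fun z => if 1 < z then max (G (TT ε z) - G b) 0 else 0) := by
  have := hG.cont
  have h2 := TT_cont (ε := ε)
  exact Measurable.ite measurableSet_Ioi (by fun_prop) measurable_const

lemma kint_m (hφ : IsBranchingMechanism φ β σ m) (hG : GoodG G G1 G2 D) (hε : 0 < ε) (b : ℝ) (hb : 0 ≤ b) :
    Integrable (fun z => if 1 < z then max (G (TT ε z) - G b) 0 else 0) m := by
  refine ((bm_int hφ).const_mul (G (1 / ε))).mono' (kint_meas hG b).aestronglyMeasurable ?_
  refine ae_of_all _ fun z => ?_
  have h4 := hG.ge1 (1 / ε) (by positivity)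
  split_ifs with h1
  · rw [Real.norm_eq_abs, abs_of_nonneg (le_max_right _ _), min_eq_left (by nlinarith), mul_one]
    exact kint_bound hG hε b z hb h1
  · rw [norm_zero]; positivity

lemma kint_n (hψ : IsImmigrationMechanism ψ h ν) (hG : GoodG G G1 G2 D) (hε : 0 < ε) (b : ℝ) (hb : 0 ≤ b) :
    Integrable (fun z => if 1 < z then max (G (TT ε z) - G b) 0 else 0) ν := by
  refine ((im_int hψ).const_mul (G (1 / ε))).mono' (kint_meas hG b).aestronglyMeasurable ?_
  filter_upwards [im_ae_pos hψ] with z hz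
  have h4 := hG.ge1 (1 / ε) (by positivity)
  split_ifs with h1
  · rw [Real.norm_eq_abs, abs_of_nonneg (le_max_right _ _), min_eq_left h1.le, mul_one]
    exact kint_bound hG hε b z hb h1
  · rw [norm_zero]; positivity

lemma gen_lower (hφ : IsBranchingMechanism φ β σ m) (hψ : IsImmigrationMechanism ψ h ν)
    (hG : GoodG G G1 G2 D) :
    ∃ C, 0 ≤ C ∧ ∀ ε, 0 < ε → ε ≤ 1 → ∀ b, 0 ≤ b → ∀ y, 0 ≤ y →
      -C * G (TT ε y) + kap b y *
        ((∫ z, (if 1 < z then max (G (TT ε z) - G b) 0 else 0) ∂m) +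
          ∫ z, (if 1 < z then max (G (TT ε z) - G b) 0 else 0) ∂ν) ≤
      gen β σ h m ν (fun y => G (TT ε y)) (FT1 G1 ε) (FT2 G1 G2 ε) y := by
  set Nm := ∫ z, min 1 (z ^ 2) ∂m with hNm
  have hD := hG.one_le
  have hh := hψ.h_nonneg
  have hm0 : 0 ≤ Nm := integral_nonneg fun z => by positivity
  refine ⟨(|β| + σ ^ 2) * D + D ^ 3 * 2 * Nm, by positivity, ?_⟩
  intro ε hε hε1 b hb y hy
  obtain ⟨B, hA⟩ := admG hG hε hε1
  have hGT := hG.ge1 _ (TT_nn hε y hy)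
  obtain ⟨g1, g2, g3⟩ := gen_main (h := h) hφ hG hε hε1 y hy hh
  unfold gen
  have i1 : -(D ^ 3 * G (TT ε y) * 2) * Nm +
      kap b y * (∫ z, (if 1 < z then max (G (TT ε z) - G b) 0 else 0) ∂m) ≤
      y * ∫ z, (G (TT ε (y + z)) - G (TT ε y) - (if z ≤ 1 then z * FT1 G1 ε y else 0)) ∂m := by
    rw [hNm, ← integral_const_mul, ← integral_const_mul, ← integral_const_mul,
      ← integral_add ((bm_int hφ).const_mul _) ((kint_m hφ hG hε b hb).const_mul _)]
    apply integral_mono_ae (((bm_int hφ).const_mul _).add ((kint_m hφ hG hε b hb).const_mul _))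
      ((hA.intm hφ y hy).const_mul y)
    filter_upwards [bm_ae_pos hφ] with z hz
    simp only [Pi.add_apply]
    by_cases h1 : z ≤ 1
    · rw [if_pos h1, if_neg (not_lt.2 h1), mul_zero, add_zero, min_eq_right (by nlinarith)]
      have := (abs_le.1 (ft_sm hG hε hε1 y z hy hz.le h1)).1
      linarith
    · rw [if_neg h1, if_pos (not_le.1 h1), sub_zero]
      have a1 := (kap_low hG hε b y z hb hy hz.le).1
      have : 0 ≤ D ^ 3 * G (TT ε y) * 2 * min 1 (z ^ 2) := by positivity
      linarith
  have i2 : kap b y * (∫ z, (if 1 < z then max (G (TT ε z) - G b) 0 else 0) ∂ν) ≤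
      ∫ z, (G (TT ε (y + z)) - G (TT ε y)) ∂ν := by
    rw [← integral_const_mul]
    apply integral_mono_ae ((kint_n hψ hG hε b hb).const_mul _) (hA.intn hψ y hy)
    filter_upwards [im_ae_pos hψ] with z hz
    by_cases h1 : z ≤ 1
    · rw [if_neg (not_lt.2 h1), mul_zero]
      exact ft_inc_nn hG hε y z hz.le
    · rw [if_pos (not_le.1 h1)]
      exact (kap_low hG hε b y z hb hy hz.le).2
  have := neg_abs_le (y * (-β * FT1 G1 ε y + σ ^ 2 / 2 * FT2 G1 G2 ε y))
  rw [mul_add y]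
  linarith
end

section
variable {φ : ℝ → ℝ} {β σ : ℝ} {m : Measure ℝ} {ψ : ℝ → ℝ} {h : ℝ} {ν : Measure ℝ}
  {v : ℝ → ℝ → ℝ} {Qγ : ℝ → ℝ → Measure ℝ} {ε : ℝ} {G G1 G2 : ℝ → ℝ} {D : ℝ}

lemma TT_lim (y : ℝ) : Tendsto (fun n : ℕ => TT (1 / ((n : ℝ) + 1)) y) atTop (nhds y) := by
  have h0 : Tendsto (fun n : ℕ => 1 / ((n : ℝ) + 1)) atTop (nhds 0) := tendsto_one_div_add_atTop_nhds_zero_nat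
  have h1 : Tendsto (fun n : ℕ => y * Real.exp (-(1 / ((n : ℝ) + 1) * y))) atTop (nhds y) := by
    have hc : Continuous (fun e : ℝ => y * Real.exp (-(e * y))) := by fun_prop
    have := (hc.tendsto 0).comp h0
    simpa [Function.comp_def] using this
  exact tendsto_of_tendsto_of_tendsto_of_le_of_le h1 tendsto_const_nhds
    (fun n => TT_ge (by positivity) y) (fun n => TT_le (by positivity) y)

lemma fatou_TT {q : Measure ℝ} {F : ℝ → ℝ} (hF : Continuous F) {B : ENNReal}
    (hB : ∀ n : ℕ, ∫⁻ y, ENNReal.ofReal (F (TT (1 / ((n : ℝ) + 1)) y)) ∂q ≤ B) :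
    ∫⁻ y, ENNReal.ofReal (F y) ∂q ≤ B := by
  have h1 : ∀ y, ENNReal.ofReal (F y) =
      liminf (fun n : ℕ => ENNReal.ofReal (F (TT (1 / ((n : ℝ) + 1)) y))) atTop := by
    intro y
    refine (Tendsto.liminf_eq ?_).symm
    exact (ENNReal.continuous_ofReal.tendsto _).comp ((hF.tendsto y).comp (TT_lim y))
  rw [lintegral_congr h1]
  refine (lintegral_liminf_le ?_).trans ?_
  · intro n
    have := TT_cont (ε := 1 / ((n : ℝ) + 1))
    exact (hF.comp this).measurable.ennreal_ofReal
  · exact liminf_le_of_le (by isBoundedDefault) (fun b hb => by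
      obtain ⟨n, hn⟩ := hb.exists
      exact hn.trans (hB n))

lemma GT_bound (hG : GoodG G G1 G2 D) (hε : 0 < ε) (z : ℝ) : G (TT ε z) ≤ G (1 / ε) := by
  apply hG.mono
  unfold TT
  apply div_le_div_of_nonneg_right _ hε.le
  linarith [Real.exp_pos (-(ε * z))]

lemma GT_int {q : Measure ℝ} [IsProbabilityMeasure q] (h0 : q (Iio 0) = 0) (hG : GoodG G G1 G2 D)
    (hε : 0 < ε) : Integrable (fun y => G (TT ε y)) q := by
  refine bdd_int h0 (C := G (1 / ε)) (hG.cont.comp TT_cont).measurable fun y hy => ?_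
  rw [abs_of_nonneg (by linarith [hG.ge1 _ (TT_nn hε y hy)])]
  exact GT_bound hG hε y

lemma trunc_upper (hφ : IsBranchingMechanism φ β σ m) (hψ : IsImmigrationMechanism ψ h ν)
    (hv : IsCumulant φ v) (hQ : IsCBISemigroup v ψ Qγ) (hG : GoodG G G1 G2 D)
    (him : Integrable (fun z => if 1 < z then G z else 0) m)
    (hin : Integrable (fun z => if 1 < z then G z else 0) ν) (t : ℝ) (ht : 0 ≤ t) :
    ∃ C, 0 ≤ C ∧ ∀ x, 0 ≤ x → ∀ ε, 0 < ε → ε ≤ 1 →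
      ∫ y, G (TT ε y) ∂(Qγ t x) ≤ C * G x := by
  obtain ⟨C0, hC0, hC⟩ := gen_upper hφ hψ hG him hin
  set K := C0 + 1 with hK
  have hK1 : 1 ≤ K := by linarith
  refine ⟨5 * Real.exp (K * t), by positivity, ?_⟩
  intro x hx ε hε hε1
  obtain ⟨P, A, k, hP, hA⟩ := approxG hφ hψ hv hQ x hx hG hε hε1
  have hgr := gronwall_right (V := fun s => ∫ y, P y ∂(Qγ s x)) (V' := fun s => ∫ y, A y ∂(Qγ s x))
    (K := K) (e := K + 1) ht (k.cont.mono fun s hs => hs.1) (fun s hs => k.deriv s hs.1) (by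
      intro s hs
      have hp := (hQ s x hs.1 hx).1
      have h0 := (hQ s x hs.1 hx).2.1
      have e1 : K * (∫ y, P y ∂(Qγ s x)) + (K + 1) = ∫ y, (K * P y + (K + 1)) ∂(Qγ s x) := by
        rw [integral_add ((k.intP s hs.1).const_mul K) (integrable_const _), integral_const_mul]
        simp
      rw [e1]
      apply integral_mono_ae (k.intA s hs.1) (((k.intP s hs.1).const_mul K).add (integrable_const _))
      filter_upwards [q_ae h0] with y hy
      simp only [Pi.add_apply]
      have a1 := (abs_le.1 (hP y hy)).1
      have a2 := (abs_le.1 (hA y hy)).2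
      have a3 := hC ε hε hε1 y hy
      have a4 := hG.ge1 _ (TT_nn hε y hy)
      have a5 : G (TT ε y) ≤ P y + 1 := by linarith
      nlinarith)
  rw [gronwallBound_of_K_ne_0 (by linarith), sub_zero, k.zero] at hgr
  have hp := (hQ t x ht hx).1
  have h0 := (hQ t x ht hx).2.1
  have b1 : ∫ y, G (TT ε y) ∂(Qγ t x) ≤ (∫ y, P y ∂(Qγ t x)) + 1 := by
    have e1 : (∫ y, P y ∂(Qγ t x)) + 1 = ∫ y, (P y + 1) ∂(Qγ t x) := by
      rw [integral_add (k.intP t ht) (integrable_const _)]; simp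
    rw [e1]
    apply integral_mono_ae (GT_int h0 hG hε) ((k.intP t ht).add (integrable_const _))
    filter_upwards [q_ae h0] with y hy
    simp only [Pi.add_apply]
    linarith [(abs_le.1 (hP y hy)).1]
  have b2 : P x ≤ G x + 1 := by
    have := (abs_le.1 (hP x hx)).2
    have := hG.mono (TT_le hε x)
    linarith
  have b3 := hG.ge1 x hx
  have hE : 1 ≤ Real.exp (K * t) := Real.one_le_exp (by positivity)
  have b4 : (K + 1) / K ≤ 2 := by rw [div_le_iff₀ (by linarith)]; linarith
  have b5 : P x * Real.exp (K * t) ≤ (G x + 1) * Real.exp (K * t) :=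
    mul_le_mul_of_nonneg_right b2 (by linarith)
  have b6 : (K + 1) / K * (Real.exp (K * t) - 1) ≤ 2 * (Real.exp (K * t) - 1) :=
    mul_le_mul_of_nonneg_right b4 (by linarith)
  nlinarith

lemma up_x (hφ : IsBranchingMechanism φ β σ m) (hψ : IsImmigrationMechanism ψ h ν)
    (hv : IsCumulant φ v) (hQ : IsCBISemigroup v ψ Qγ) (hG : GoodG G G1 G2 D)
    (him : Integrable (fun z => if 1 < z then G z else 0) m)
    (hin : Integrable (fun z => if 1 < z then G z else 0) ν) (t : ℝ) (ht : 0 ≤ t) :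
    ∃ C, 0 ≤ C ∧ ∀ x, 0 ≤ x →
      ∫⁻ y, ENNReal.ofReal (G y) ∂(Qγ t x) ≤ ENNReal.ofReal C * ENNReal.ofReal (G x) := by
  obtain ⟨C, hC0, hC⟩ := trunc_upper hφ hψ hv hQ hG him hin t ht
  refine ⟨C, hC0, fun x hx => fatou_TT hG.cont fun n => ?_⟩
  have hp := (hQ t x ht hx).1
  have h0 := (hQ t x ht hx).2.1
  have hε : (0:ℝ) < 1 / ((n : ℝ) + 1) := by positivity
  have hε1 : 1 / ((n : ℝ) + 1) ≤ 1 := by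
    rw [div_le_one (by positivity)]; linarith [(n.cast_nonneg : (0:ℝ) ≤ n)]
  rw [← ofReal_integral_eq_lintegral_ofReal (GT_int h0 hG hε), ← ENNReal.ofReal_mul hC0]
  · exact ENNReal.ofReal_le_ofReal (hC x hx _ hε hε1)
  · filter_upwards [q_ae h0] with y hy
    simp only [Pi.zero_apply]
    linarith [hG.ge1 _ (TT_nn hε y hy)]

lemma dbl_iter (hG : GoodG G G1 G2 D) (k : ℕ) (y : ℝ) (hy : 0 ≤ y) : G (2 ^ k * y) ≤ D ^ k * G y := by
  have hD := hG.one_le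
  induction k with
  | zero => simp
  | succ k ih =>
    have h1 : G (2 ^ (k + 1) * y) ≤ G (2 * (2 ^ k * y) + 2) := hG.mono (by rw [pow_succ]; linarith)
    have h2 := hG.dbl (2 ^ k * y) (by positivity)
    calc _ ≤ D * G (2 ^ k * y) := h1.trans h2
      _ ≤ D * (D ^ k * G y) := mul_le_mul_of_nonneg_left ih (by linarith)
      _ = _ := by ring

lemma low_x (hφ : IsBranchingMechanism φ β σ m)
    (hv : IsCumulant φ v) (hQ : IsCBISemigroup v ψ Qγ) (hG : GoodG G G1 G2 D) (t : ℝ) (ht : 0 ≤ t) :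
    ∃ C x0, 0 ≤ C ∧ 0 ≤ x0 ∧ ∀ x, x0 ≤ x →
      ENNReal.ofReal (G x) ≤ ENNReal.ofReal C * ∫⁻ y, ENNReal.ofReal (G y) ∂(Qγ t x) := by
  have hw : 0 < v t 1 := (cumul_facts hφ hv 1 one_pos).pos t ht
  set w := v t 1 with hwdef
  set M := Real.exp (-∫ s in (0:ℝ)..t, ψ (v s 1)) with hM
  have hMpos : 0 < M := Real.exp_pos _
  have hD := hG.one_le
  obtain ⟨k, hk⟩ := pow_unbounded_of_one_lt (2 / w) (by norm_num : (1:ℝ) < 2)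
  refine ⟨2 * D ^ k, 4 * M / w, by positivity, by positivity, ?_⟩
  intro x hx
  have hx0 : 0 ≤ x := le_trans (by positivity) hx
  obtain ⟨hp, h0, hL⟩ := hQ t x ht hx0
  set r := x * w / 2 with hr
  have hr0 : 0 ≤ r := by positivity
  have hrM : 2 * M ≤ r := by
    rw [div_le_iff₀ hw] at hx; linarith
  have hGr := hG.ge1 r hr0
  have hei : Integrable (fun y => Real.exp (-(1 * y))) (Qγ t x) :=
    bdd_int h0 (C := 1) (by fun_prop) (fun y hy => by
      rw [abs_of_pos (Real.exp_pos _)]; apply Real.exp_le_one_iff.2; linarith)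
  have c1 : ∫ y, G r * (1 - Real.exp r * Real.exp (-(1 * y))) ∂(Qγ t x) =
      G r * (1 - M * Real.exp (-r)) := by
    rw [integral_const_mul, integral_sub (integrable_const _) (hei.const_mul _), integral_const_mul,
      hL 1 zero_le_one]
    have : Real.exp r * Real.exp (-(x * v t 1) - ∫ s in (0:ℝ)..t, ψ (v s 1)) = M * Real.exp (-r) := by
      rw [hM, ← Real.exp_add, ← Real.exp_add, ← hwdef, hr]; congr 1; ring
    rw [this]; simp
  have c2 : M * Real.exp (-r) ≤ 1 / 2 := by
    have : r + 1 ≤ Real.exp r := Real.add_one_le_exp r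
    rw [Real.exp_neg, ← div_eq_mul_inv, div_le_iff₀ (Real.exp_pos _)]
    linarith
  have c3 : G r / 2 ≤ ∫ y, G r * (1 - Real.exp r * Real.exp (-(1 * y))) ∂(Qγ t x) := by
    rw [c1]; nlinarith
  have hii : Integrable (fun y => G r * (1 - Real.exp r * Real.exp (-(1 * y)))) (Qγ t x) :=
    ((integrable_const _).sub (hei.const_mul _)).const_mul _
  have c4 : ENNReal.ofReal (G r / 2) ≤ ∫⁻ y, ENNReal.ofReal (G y) ∂(Qγ t x) := by
    refine (ENNReal.ofReal_le_ofReal (c3.trans (integral_mono_ae (g := fun y =>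
      (max (G r * (1 - Real.exp r * Real.exp (-(1 * y)))) 0)) ?_ ?_ ?_))).trans ?_
    · exact hii
    · exact hii.pos_part
    · exact ae_of_all _ fun y => le_max_left _ _
    · rw [ofReal_integral_eq_lintegral_ofReal
        hii.pos_part (ae_of_all _ fun y => le_max_right _ _)]
      apply lintegral_mono_ae
      filter_upwards [q_ae h0] with y hy
      apply ENNReal.ofReal_le_ofReal
      have hGy := hG.ge1 y hy
      apply max_le _ (by linarith)
      rw [← Real.exp_add]
      rcases le_total r y with hry | hry
      · have := hG.mono hry
        have := Real.exp_pos (r + -(1 * y))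
        nlinarith
      · have : 1 ≤ Real.exp (r + -(1 * y)) := Real.one_le_exp (by linarith)
        nlinarith
  have c5 : G x ≤ D ^ k * G r := by
    refine (hG.mono ?_).trans (dbl_iter hG k r hr0)
    rw [div_lt_iff₀ hw] at hk
    nlinarith
  calc ENNReal.ofReal (G x) ≤ ENNReal.ofReal (2 * D ^ k * (G r / 2)) :=
        ENNReal.ofReal_le_ofReal (by linarith)
    _ = ENNReal.ofReal (2 * D ^ k) * ENNReal.ofReal (G r / 2) := ENNReal.ofReal_mul (by positivity)
    _ ≤ _ := by gcongr

lemma low_mu (hφ : IsBranchingMechanism φ β σ m)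
    (hv : IsCumulant φ v) (hQ : IsCBISemigroup v ψ Qγ) (hG : GoodG G G1 G2 D) (t : ℝ) (ht : 0 ≤ t)
    {μ : Measure ℝ} [IsProbabilityMeasure μ]
    (hfin : ∫⁻ x, (∫⁻ y, ENNReal.ofReal (G y) ∂(Qγ t x)) ∂μ < ⊤) :
    ∫⁻ x, ENNReal.ofReal (G x) ∂μ < ⊤ := by
  obtain ⟨C, x0, hC, hx0, H⟩ := low_x hφ hv hQ hG t ht
  refine lt_of_le_of_lt (lintegral_mono (g := fun x =>
    ENNReal.ofReal C * (∫⁻ y, ENNReal.ofReal (G y) ∂(Qγ t x)) + ENNReal.ofReal (G x0)) ?_) ?_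
  · intro x
    rcases le_total x0 x with hx | hx
    · exact (H x hx).trans le_self_add
    · exact (ENNReal.ofReal_le_ofReal (hG.mono hx)).trans le_add_self
  · rw [lintegral_add_right _ measurable_const, lintegral_const_mul' _ _ ENNReal.ofReal_ne_top]
    simp only [lintegral_const, measure_univ, mul_one]
    exact ENNReal.add_lt_top.2 ⟨ENNReal.mul_lt_top ENNReal.ofReal_lt_top hfin, ENNReal.ofReal_lt_top⟩
end

section
variable {φ : ℝ → ℝ} {β σ : ℝ} {m : Measure ℝ} {ψ : ℝ → ℝ} {h : ℝ} {ν : Measure ℝ}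
  {v : ℝ → ℝ → ℝ} {Qγ : ℝ → ℝ → Measure ℝ} {ε : ℝ} {G G1 G2 : ℝ → ℝ} {D : ℝ}

lemma kol_lower {x : ℝ} {P A : ℝ → ℝ} (k : Kol Qγ x P A) {a b C e : ℝ} (ha : 0 ≤ a) (hab : a ≤ b)
    (hC : 0 < C) (H : ∀ s ∈ Ico a b, -C * (∫ y, P y ∂(Qγ s x)) - e ≤ ∫ y, A y ∂(Qγ s x)) :
    (∫ y, P y ∂(Qγ a x)) * Real.exp (-C * (b - a)) - e * ((1 - Real.exp (-C * (b - a))) / C) ≤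
      ∫ y, P y ∂(Qγ b x) := by
  have hgr := gronwall_right (V := fun s => -∫ y, P y ∂(Qγ s x)) (V' := fun s => -∫ y, A y ∂(Qγ s x))
    (K := -C) (e := e) hab (k.cont.mono fun s hs => ha.trans hs.1).neg
    (fun s hs => (k.deriv s (ha.trans hs.1)).neg) (by
      intro s hs
      have := H s hs
      linarith)
  rw [gronwallBound_of_K_ne_0 (by linarith)] at hgr
  beta_reduce at hgr
  have e1 : e / -C * (Real.exp (-C * (b - a)) - 1) = e * ((1 - Real.exp (-C * (b - a))) / C) := by
    field_simp; ring
  rw [e1] at hgr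
  linarith

lemma kap_kol (hφ : IsBranchingMechanism φ β σ m) (hψ : IsImmigrationMechanism ψ h ν)
    (hv : IsCumulant φ v) (hQ : IsCBISemigroup v ψ Qγ) (x : ℝ) (hx : 0 ≤ x) (b : ℝ) :
    ∃ A, Kol Qγ x (kap b) A := by
  have k := ((kol_const hQ x hx (-Real.exp (-b))).add
    (kol_exp hφ hψ hv hQ x hx (1 + Real.exp (-b)) 1 one_pos)).add
    (kol_exp hφ hψ hv hQ x hx (-1) 2 two_pos)
  suffices he : (kap b) = (fun y => -Real.exp (-b) + (1 + Real.exp (-b)) * Real.exp (-(1 * y)) +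
      -1 * Real.exp (-(2 * y))) by
    rw [he]; exact ⟨_, k⟩
  funext y
  unfold kap
  have : Real.exp (-(2 * y)) = Real.exp (-y) * Real.exp (-y) := by
    rw [← Real.exp_add]; congr 1; ring
  rw [this, one_mul]; ring

lemma kap_pos_near (hφ : IsBranchingMechanism φ β σ m) (hψ : IsImmigrationMechanism ψ h ν)
    (hv : IsCumulant φ v) (hQ : IsCBISemigroup v ψ Qγ) (x : ℝ) (hx : 0 < x) (t : ℝ) (ht : 0 < t) :
    ∃ κ s0, 0 < κ ∧ 0 < s0 ∧ s0 ≤ t ∧ ∀ s, 0 ≤ s → s ≤ s0 → κ ≤ ∫ y, kap (x + 1) y ∂(Qγ s x) := by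
  obtain ⟨A, k⟩ := kap_kol hφ hψ hv hQ x hx.le (x + 1)
  have h0 : 0 < kap (x + 1) x := by
    unfold kap
    apply mul_pos
    · rw [sub_pos, Real.exp_lt_one_iff]; linarith
    · rw [sub_pos, Real.exp_lt_exp]; linarith
  have hc := k.cont 0 self_mem_Ici
  have hev : ∀ᶠ s in nhdsWithin 0 (Ici (0:ℝ)), kap (x + 1) x / 2 < ∫ y, kap (x + 1) y ∂(Qγ s x) := by
    apply hc.eventually_const_lt
    beta_reduce; rw [k.zero]; linarith
  obtain ⟨d, hd, hball⟩ := Metric.mem_nhdsWithin_iff.1 hev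
  refine ⟨kap (x + 1) x / 2, min (d / 2) t, by linarith, by positivity, min_le_right _ _, ?_⟩
  intro s hs hs1
  have : s ≤ d / 2 := hs1.trans (min_le_left _ _)
  refine le_of_lt (hball ⟨?_, hs⟩)
  rw [Metric.mem_ball, Real.dist_eq, sub_zero, abs_of_nonneg hs]
  linarith

/-- The truncated jump integrals. -/
def JJ (G : ℝ → ℝ) (ε b : ℝ) (m : Measure ℝ) : ℝ :=
  ∫ z, (if 1 < z then max (G (TT ε z) - G b) 0 else 0) ∂m

lemma JJ_nn (m : Measure ℝ) (b : ℝ) : 0 ≤ JJ G ε b m :=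
  integral_nonneg fun z => by
    show 0 ≤ if 1 < z then max (G (TT ε z) - G b) 0 else 0
    split_ifs
    · exact le_max_right _ _
    · exact le_rfl

lemma JJ_zero (hG : GoodG G G1 G2 D) (hε : 0 < ε) (m : Measure ℝ) : JJ G ε (1 / ε) m = 0 := by
  unfold JJ
  have : (fun z => if 1 < z then max (G (TT ε z) - G (1 / ε)) 0 else 0) = fun _ => (0:ℝ) := by
    funext z
    split_ifs
    · exact max_eq_right (by linarith [GT_bound hG hε z])
    · rfl
  rw [this, integral_zero]

lemma JJ_bound (hφ : IsBranchingMechanism φ β σ m) (hψ : IsImmigrationMechanism ψ h ν)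
    (hv : IsCumulant φ v) (hQ : IsCBISemigroup v ψ Qγ) (hG : GoodG G G1 G2 D) (t : ℝ) (ht : 0 < t)
    (x : ℝ) (hx : 0 < x) (hfin : ∫⁻ y, ENNReal.ofReal (G y) ∂(Qγ t x) < ⊤) :
    ∃ R, ∀ ε, 0 < ε → ε ≤ 1 → JJ G ε (x + 1) m + JJ G ε (x + 1) ν ≤ R := by
  obtain ⟨C0, hC0, hlow⟩ := gen_lower hφ hψ hG
  obtain ⟨κ, s0, hκ, hs0, hs0t, hkap⟩ := kap_pos_near hφ hψ hv hQ x hx t ht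
  obtain ⟨A', kk⟩ := kap_kol hφ hψ hv hQ x hx.le (x + 1)
  set C := C0 + 1 with hCdef
  have hC : 0 < C := by linarith
  set S := (∫⁻ y, ENNReal.ofReal (G y) ∂(Qγ t x)).toReal with hS
  set θ := (1 - Real.exp (-C * (s0 - 0))) / C with hθ
  have hθ0 : 0 < θ := by
    apply div_pos _ hC
    rw [sub_pos, Real.exp_lt_one_iff]; nlinarith
  set E := Real.exp (-C * (t - s0)) with hE
  have hE0 : 0 < E := Real.exp_pos _
  refine ⟨(S + 1 + (C + 1) / C + (C + 1) * θ * E) / (κ * θ * E), ?_⟩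
  intro ε hε hε1
  set J := JJ G ε (x + 1) m + JJ G ε (x + 1) ν with hJ
  have hJ0 : 0 ≤ J := add_nonneg (JJ_nn _ _) (JJ_nn _ _)
  rw [le_div_iff₀ (by positivity)]
  obtain ⟨P, A, k, hP, hA⟩ := approxG hφ hψ hv hQ x hx.le hG hε hε1
  have hA2 : ∀ b, 0 ≤ b → ∀ y, 0 ≤ y → -C * P y - (C + 1) + kap b y * (JJ G ε b m + JJ G ε b ν) ≤ A y := by
    intro b hb y hy
    have a1 := (abs_le.1 (hP y hy)).1
    have a2 := (abs_le.1 (hA y hy)).1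
    have a3 := hlow ε hε hε1 b hb y hy
    have a4 := hG.ge1 _ (TT_nn hε y hy)
    unfold JJ
    nlinarith
  -- first phase
  have p1 := kol_lower k (a := 0) (b := s0) (C := C) (e := C + 1 - κ * J) le_rfl hs0.le hC (by
    intro s hs
    have hp := (hQ s x hs.1 hx.le).1
    have h0 := (hQ s x hs.1 hx.le).2.1
    have i1 : Integrable (fun y => -C * P y - (C + 1)) (Qγ s x) :=
      ((k.intP s hs.1).const_mul _).sub (integrable_const _)
    have i2 : Integrable (fun y => kap (x + 1) y * J) (Qγ s x) := (kk.intP s hs.1).mul_const J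
    have hm : ∫ y, ((-C * P y - (C + 1)) + kap (x + 1) y * J) ∂(Qγ s x) ≤ ∫ y, A y ∂(Qγ s x) := by
      apply integral_mono_ae (i1.add i2) (k.intA s hs.1)
      filter_upwards [q_ae h0] with y hy
      exact hA2 (x + 1) (by linarith) y hy
    rw [integral_add i1 i2, integral_sub ((k.intP s hs.1).const_mul _) (integrable_const _),
      integral_const_mul, integral_mul_const] at hm
    simp only [integral_const, probReal_univ, smul_eq_mul, one_mul] at hm
    have := mul_le_mul_of_nonneg_right (hkap s hs.1 hs.2.le) hJ0
    linarith)
  have p2 := kol_lower k (a := s0) (b := t) (C := C) (e := C + 1) hs0.le hs0t hC (by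
    intro s hs
    have hs' : 0 ≤ s := hs0.le.trans hs.1
    have hp := (hQ s x hs' hx.le).1
    have h0 := (hQ s x hs' hx.le).2.1
    have hm : ∫ y, (-C * P y - (C + 1)) ∂(Qγ s x) ≤ ∫ y, A y ∂(Qγ s x) := by
      apply integral_mono_ae (((k.intP s hs').const_mul _).sub (integrable_const _)) (k.intA s hs')
      filter_upwards [q_ae h0] with y hy
      have := hA2 (1 / ε) (by positivity) y hy
      rw [JJ_zero hG hε, JJ_zero hG hε, add_zero, mul_zero, add_zero] at this
      exact this
    rw [integral_sub ((k.intP s hs').const_mul _) (integrable_const _), integral_const_mul] at hm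
    simp only [integral_const, probReal_univ, smul_eq_mul, one_mul] at hm
    exact hm)
  rw [← hθ, k.zero] at p1
  rw [← hE] at p2
  have hPx : 0 ≤ P x := by
    have a1 := (abs_le.1 (hP x hx.le)).1
    have a4 := hG.ge1 _ (TT_nn hε x hx.le)
    linarith
  have hVt : ∫ y, P y ∂(Qγ t x) ≤ S + 1 := by
    have hp := (hQ t x ht.le hx.le).1
    have h0 := (hQ t x ht.le hx.le).2.1
    have hGi : Integrable G (Qγ t x) := by
      refine ⟨hG.cont.aestronglyMeasurable, ?_⟩
      rw [hasFiniteIntegral_iff_ofReal]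
      · exact hfin
      · filter_upwards [q_ae h0] with y hy
        simp only [Pi.zero_apply]; linarith [hG.ge1 y hy]
    have hSe : S = ∫ y, G y ∂(Qγ t x) := by
      rw [hS, integral_eq_lintegral_of_nonneg_ae _ hG.cont.aestronglyMeasurable]
      filter_upwards [q_ae h0] with y hy
      simp only [Pi.zero_apply]; linarith [hG.ge1 y hy]
    have e1 : S + 1 = ∫ y, (G y + 1) ∂(Qγ t x) := by
      rw [integral_add hGi (integrable_const _), hSe]; simp
    rw [e1]
    apply integral_mono_ae (k.intP t ht.le) (hGi.add (integrable_const _))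
    filter_upwards [q_ae h0] with y hy
    simp only [Pi.add_apply]
    linarith [(abs_le.1 (hP y hy)).2, hG.mono (TT_le hε y)]
  have p3 : (κ * J - (C + 1)) * θ ≤ ∫ y, P y ∂(Qγ s0 x) := by
    have := mul_nonneg hPx (Real.exp_pos (-C * (s0 - 0))).le
    linarith
  have p4 := mul_le_mul_of_nonneg_right p3 hE0.le
  have p5 : (C + 1) * ((1 - E) / C) ≤ (C + 1) / C := by
    rw [mul_div_assoc']
    apply div_le_div_of_nonneg_right _ hC.le
    nlinarith
  linarith

lemma bm_big (hφ : IsBranchingMechanism φ β σ m) : m (Ioi 1) < ⊤ := by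
  refine lt_of_le_of_lt (measure_mono ?_) ((bm_int hφ).measure_norm_ge_lt_top one_pos)
  intro z hz
  have hz : 1 < z := hz
  show 1 ≤ ‖min 1 (z ^ 2)‖
  rw [min_eq_left (by nlinarith)]; simp

lemma im_big (hψ : IsImmigrationMechanism ψ h ν) : ν (Ioi 1) < ⊤ := by
  refine lt_of_le_of_lt (measure_mono ?_) ((im_int hψ).measure_norm_ge_lt_top one_pos)
  intro z hz
  have hz : 1 < z := hz
  show 1 ≤ ‖min 1 z‖
  rw [min_eq_left hz.le]; simp

lemma JJ_fatou (hG : GoodG G G1 G2 D) {q : Measure ℝ} (hq : q (Ioi 1) < ⊤) {b R : ℝ} (hb : 0 ≤ b)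
    (hi : ∀ ε, 0 < ε → Integrable (fun z => if 1 < z then max (G (TT ε z) - G b) 0 else 0) q)
    (H : ∀ ε, 0 < ε → ε ≤ 1 → JJ G ε b q ≤ R) :
    ∫⁻ z in Ioi 1, ENNReal.ofReal (G z) ∂q < ⊤ := by
  have h1 : ∫⁻ z in Ioi 1, ENNReal.ofReal (max (G z - G b) 0) ∂q ≤ ENNReal.ofReal R := by
    refine fatou_TT (F := fun z => max (G z - G b) 0) (by have := hG.cont; fun_prop) fun n => ?_
    have hε : (0:ℝ) < 1 / ((n : ℝ) + 1) := by positivity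
    have hε1 : 1 / ((n : ℝ) + 1) ≤ 1 := by
      rw [div_le_one (by positivity)]; linarith [(n.cast_nonneg : (0:ℝ) ≤ n)]
    have := ENNReal.ofReal_le_ofReal (H _ hε hε1)
    unfold JJ at this
    rw [ofReal_integral_eq_lintegral_ofReal (hi _ hε)
      (ae_of_all _ fun z => by
        show 0 ≤ if 1 < z then max (G (TT _ z) - G b) 0 else 0
        split_ifs
        · exact le_max_right _ _
        · exact le_rfl)] at this
    refine le_trans (le_of_eq ?_) this
    rw [← lintegral_indicator measurableSet_Ioi]
    apply lintegral_congr
    intro z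
    by_cases hz : 1 < z
    · rw [indicator_of_mem (show z ∈ Ioi (1:ℝ) from hz), if_pos hz]
    · rw [indicator_of_notMem (show z ∉ Ioi (1:ℝ) from hz), if_neg hz, ENNReal.ofReal_zero]
  refine lt_of_le_of_lt (lintegral_mono (g := fun z => ENNReal.ofReal (max (G z - G b) 0) + ENNReal.ofReal (G b)) ?_) ?_
  · intro z
    show ENNReal.ofReal (G z) ≤ ENNReal.ofReal (max (G z - G b) 0) + ENNReal.ofReal (G b)
    rw [← ENNReal.ofReal_add (le_max_right _ _) (by linarith [hG.ge1 b hb])]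
    apply ENNReal.ofReal_le_ofReal
    linarith [le_max_left (G z - G b) 0]
  · rw [lintegral_add_right _ measurable_const]
    simp only [lintegral_const, Measure.restrict_apply_univ]
    exact ENNReal.add_lt_top.2 ⟨lt_of_le_of_lt h1 ENNReal.ofReal_lt_top,
      ENNReal.mul_lt_top ENNReal.ofReal_lt_top hq⟩

lemma low_levy (hφ : IsBranchingMechanism φ β σ m) (hψ : IsImmigrationMechanism ψ h ν)
    (hv : IsCumulant φ v) (hQ : IsCBISemigroup v ψ Qγ) (hG : GoodG G G1 G2 D) (t : ℝ) (ht : 0 < t)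
    (x : ℝ) (hx : 0 < x) (hfin : ∫⁻ y, ENNReal.ofReal (G y) ∂(Qγ t x) < ⊤) :
    ∫⁻ z in Ioi 1, ENNReal.ofReal (G z) ∂(m + ν) < ⊤ := by
  obtain ⟨R, hR⟩ := JJ_bound hφ hψ hv hQ hG t ht x hx hfin
  have hb : 0 ≤ x + 1 := by linarith
  rw [Measure.restrict_add, lintegral_add_measure]
  refine ENNReal.add_lt_top.2 ⟨?_, ?_⟩
  · exact JJ_fatou hG (bm_big hφ) (R := R) hb (fun ε hε => kint_m hφ hG hε _ hb) fun ε hε hε1 => by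
      have := hR ε hε hε1
      linarith [JJ_nn (G := G) (ε := ε) ν (x + 1)]
  · exact JJ_fatou hG (im_big hψ) (R := R) hb (fun ε hε => kint_n hψ hG hε _ hb) fun ε hε hε1 => by
      have := hR ε hε hε1
      linarith [JJ_nn (G := G) (ε := ε) m (x + 1)]

lemma levy_int (hG : GoodG G G1 G2 D) {q : Measure ℝ} (H : ∫⁻ z in Ioi 1, ENNReal.ofReal (G z) ∂q < ⊤) :
    Integrable (fun z => if 1 < z then G z else 0) q := by
  have hm : Measurable (fun z => if 1 < z then G z else 0) :=
    Measurable.ite measurableSet_Ioi hG.cont.measurable measurable_const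
  refine ⟨hm.aestronglyMeasurable, ?_⟩
  rw [hasFiniteIntegral_iff_ofReal]
  · refine lt_of_le_of_lt (le_of_eq ?_) H
    rw [← lintegral_indicator measurableSet_Ioi]
    apply lintegral_congr
    intro z
    by_cases hz : 1 < z
    · rw [indicator_of_mem (show z ∈ Ioi (1:ℝ) from hz), if_pos hz]
    · rw [indicator_of_notMem (show z ∉ Ioi (1:ℝ) from hz), if_neg hz, ENNReal.ofReal_zero]
  · refine ae_of_all _ fun z => ?_
    show 0 ≤ if 1 < z then G z else 0
    split_ifs with h1
    · linarith [hG.ge1 z (by linarith)]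
    · exact le_rfl

lemma crit_G (hφ : IsBranchingMechanism φ β σ m) (hψ : IsImmigrationMechanism ψ h ν)
    (hv : IsCumulant φ v) (hQ : IsCBISemigroup v ψ Qγ) (hG : GoodG G G1 G2 D)
    {μ : Measure ℝ} (hμ : IsProbabilityMeasure μ)
    (hμ0 : μ (Set.Iio 0) = 0) (hμpos : 0 < μ (Set.Ioi 0)) (t : ℝ) (ht : 0 < t) :
    (∫⁻ x, (∫⁻ y, ENNReal.ofReal (G y) ∂(Qγ t x)) ∂μ) < ⊤ ↔
      ((∫⁻ z in Set.Ioi 1, ENNReal.ofReal (G z) ∂(m + ν)) < ⊤ ∧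
        (∫⁻ x, ENNReal.ofReal (G x) ∂μ) < ⊤) := by
  constructor
  · intro H
    refine ⟨?_, low_mu hφ hv hQ hG t ht.le H⟩
    by_contra hcon
    have hall : ∀ x, 0 < x → ∫⁻ y, ENNReal.ofReal (G y) ∂(Qγ t x) = ⊤ := by
      intro x hx
      by_contra hne
      exact hcon (low_levy hφ hψ hv hQ hG t ht x hx (lt_top_iff_ne_top.2 hne))
    have : ∫⁻ _ in Ioi 0, (⊤ : ENNReal) ∂μ ≤ ∫⁻ x, (∫⁻ y, ENNReal.ofReal (G y) ∂(Qγ t x)) ∂μ := by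
      rw [← lintegral_indicator measurableSet_Ioi]
      apply lintegral_mono
      intro x
      by_cases hx : x ∈ Ioi (0:ℝ)
      · exact le_top.trans (hall x hx).ge
      · rw [indicator_of_notMem hx]; exact bot_le
    rw [lintegral_const, Measure.restrict_apply_univ, ENNReal.top_mul hμpos.ne'] at this
    exact absurd H (not_lt.2 this)
  · rintro ⟨H1, H2⟩
    rw [Measure.restrict_add, lintegral_add_measure] at H1
    obtain ⟨a1, a2⟩ := ENNReal.add_lt_top.1 H1
    obtain ⟨C, hC, hup⟩ := up_x hφ hψ hv hQ hG (levy_int hG a1) (levy_int hG a2) t ht.le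
    refine lt_of_le_of_lt (lintegral_mono_ae (g := fun x => ENNReal.ofReal C * ENNReal.ofReal (G x)) ?_) ?_
    · filter_upwards [q_ae hμ0] with x hx
      exact hup x hx
    · rw [lintegral_const_mul' _ _ ENNReal.ofReal_ne_top]
      exact ENNReal.mul_lt_top ENNReal.ofReal_lt_top H2

lemma crit_cmp (hφ : IsBranchingMechanism φ β σ m) (hψ : IsImmigrationMechanism ψ h ν)
    (hQ : IsCBISemigroup v ψ Qγ)
    {μ : Measure ℝ} (hμ0 : μ (Set.Iio 0) = 0) (t : ℝ) (ht : 0 < t)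
    (f g : ℝ → ℝ) (a : ℝ) (ha : 0 ≤ a) (hfg : ∀ x, 0 ≤ x → f x ≤ a * g x) :
    (∫⁻ x, (∫⁻ y, ENNReal.ofReal (f y) ∂(Qγ t x)) ∂μ ≤
      ENNReal.ofReal a * ∫⁻ x, (∫⁻ y, ENNReal.ofReal (g y) ∂(Qγ t x)) ∂μ) ∧
    (∫⁻ z in Set.Ioi 1, ENNReal.ofReal (f z) ∂(m + ν) ≤
      ENNReal.ofReal a * ∫⁻ z in Set.Ioi 1, ENNReal.ofReal (g z) ∂(m + ν)) ∧
    (∫⁻ x, ENNReal.ofReal (f x) ∂μ ≤ ENNReal.ofReal a * ∫⁻ x, ENNReal.ofReal (g x) ∂μ) := by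
  have key : ∀ q : Measure ℝ, (∀ᵐ z ∂q, 0 ≤ z) →
      ∫⁻ z, ENNReal.ofReal (f z) ∂q ≤ ENNReal.ofReal a * ∫⁻ z, ENNReal.ofReal (g z) ∂q := by
    intro q hq
    rw [← lintegral_const_mul' _ _ ENNReal.ofReal_ne_top]
    apply lintegral_mono_ae
    filter_upwards [hq] with z hz
    rw [← ENNReal.ofReal_mul ha]
    exact ENNReal.ofReal_le_ofReal (hfg z hz)
  refine ⟨?_, ?_, key μ (q_ae hμ0)⟩
  · rw [← lintegral_const_mul' _ _ ENNReal.ofReal_ne_top]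
    apply lintegral_mono_ae
    filter_upwards [q_ae hμ0] with x hx
    exact key _ (q_ae (hQ t x ht.le hx).2.1)
  · apply key
    filter_upwards [ae_restrict_mem measurableSet_Ioi] with z hz
    exact zero_le_one.trans (le_of_lt hz)

lemma crit_bdd (hφ : IsBranchingMechanism φ β σ m) (hψ : IsImmigrationMechanism ψ h ν)
    (hQ : IsCBISemigroup v ψ Qγ)
    {μ : Measure ℝ} (hμ : IsProbabilityMeasure μ) (hμ0 : μ (Set.Iio 0) = 0) (t : ℝ) (ht : 0 < t)
    (f : ℝ → ℝ) (M : ℝ) (hM : ∀ x, 0 ≤ x → f x ≤ M) :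
    (∫⁻ x, (∫⁻ y, ENNReal.ofReal (f y) ∂(Qγ t x)) ∂μ) < ⊤ ∧
      (∫⁻ z in Set.Ioi 1, ENNReal.ofReal (f z) ∂(m + ν)) < ⊤ ∧
        (∫⁻ x, ENNReal.ofReal (f x) ∂μ) < ⊤ := by
  obtain ⟨c1, c2, c3⟩ := crit_cmp (m := m) (ν := ν) hφ hψ hQ hμ0 t ht f (fun _ => 1) (max M 0) (le_max_right _ _)
    (fun x hx => by rw [mul_one]; exact (hM x hx).trans (le_max_left _ _))
  refine ⟨lt_of_le_of_lt c1 (ENNReal.mul_lt_top ENNReal.ofReal_lt_top ?_),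
    lt_of_le_of_lt c2 (ENNReal.mul_lt_top ENNReal.ofReal_lt_top ?_),
    lt_of_le_of_lt c3 (ENNReal.mul_lt_top ENNReal.ofReal_lt_top ?_)⟩
  · have : ∫⁻ x, (∫⁻ _, ENNReal.ofReal 1 ∂(Qγ t x)) ∂μ = ∫⁻ _, 1 ∂μ := by
      apply lintegral_congr_ae
      filter_upwards [q_ae hμ0] with x hx
      have := (hQ t x ht.le hx).1
      simp
    rw [this]; simp
  · rw [lintegral_const, Measure.restrict_apply_univ, Measure.add_apply]
    exact ENNReal.mul_lt_top ENNReal.ofReal_lt_top (ENNReal.add_lt_top.2 ⟨bm_big hφ, im_big hψ⟩)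
  · simp
end


/-- Theorem 2.2: for a CBI-process with branching mechanism `φ` (Lévy measure
`m`) satisfying Grey's condition, immigration mechanism `ψ` (immigration
measure `ν`) and initial law `μ` with `μ((0,∞)) > 0`, for every `t > 0` the
`f`-moment at time `t` is finite iff `∫_{(1,∞)} f(z) (m+ν)(dz) < ∞` and the
`f`-moment of `μ` is finite. -/
theorem cbi_f_moment_criterion
    (f : ℝ → ℝ) (hf : ConditionA f)
    (φ : ℝ → ℝ) (β σ : ℝ) (m : Measure ℝ)
    (hφ : IsBranchingMechanism φ β σ m) (hGrey : GreyCondition φ)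
    (ψ : ℝ → ℝ) (h : ℝ) (ν : Measure ℝ)
    (hψ : IsImmigrationMechanism ψ h ν)
    (v : ℝ → ℝ → ℝ) (hv : IsCumulant φ v)
    (Qγ : ℝ → ℝ → Measure ℝ) (hQγ : IsCBISemigroup v ψ Qγ)
    (μ : Measure ℝ) (hμ : IsProbabilityMeasure μ)
    (hμ0 : μ (Set.Iio 0) = 0) (hμpos : 0 < μ (Set.Ioi 0))
    (t : ℝ) (ht : 0 < t) :
    (∫⁻ x, (∫⁻ y, ENNReal.ofReal (f y) ∂(Qγ t x)) ∂μ) < ⊤ ↔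
      ((∫⁻ z in Set.Ioi 1, ENNReal.ofReal (f z) ∂(m + ν)) < ⊤ ∧
        (∫⁻ x, ENNReal.ofReal (f x) ∂μ) < ⊤) := by
  rcases condA_good f hf with ⟨M, hM⟩ | ⟨G, G1, G2, D, a, hG, ha, hfG⟩
  · obtain ⟨c1, c2, c3⟩ := crit_bdd hφ hψ hQγ hμ hμ0 t ht f M hM
    exact ⟨fun _ => ⟨c2, c3⟩, fun _ => c1⟩
  · have hcrit := crit_G hφ hψ hv hQγ hG hμ hμ0 hμpos t ht
    obtain ⟨p1, p2, p3⟩ := crit_cmp (m := m) (ν := ν) hφ hψ hQγ hμ0 t ht f G a ha.le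
      (fun x hx => (hfG x hx).1)
    obtain ⟨r1, r2, r3⟩ := crit_cmp (m := m) (ν := ν) hφ hψ hQγ hμ0 t ht G f a ha.le
      (fun x hx => (hfG x hx).2)
    have fin : ∀ {A B : ENNReal}, A ≤ ENNReal.ofReal a * B → B < ⊤ → A < ⊤ := fun h1 h2 =>
      lt_of_le_of_lt h1 (ENNReal.mul_lt_top ENNReal.ofReal_lt_top h2)
    constructor
    · intro H
      obtain ⟨u1, u2⟩ := hcrit.1 (fin r1 H)
      exact ⟨fin p2 u1, fin p3 u2⟩
    · rintro ⟨H1, H2⟩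
      exact fin p1 (hcrit.2 ⟨fin r2 H1, fin r3 H2⟩)
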